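/- arXiv:2505.07756 — 3 statements merged into one kernel-verified Lean document; each statement's English description precedes it below -/
import Mathlib

section
/- Let n ≥ 7 and let 𝒻 be a family of 3-element subsets of [n] = {1, …, n} that shatters no 3-element subset of [n] (i.e., 𝒻 has VC-dimension at most 2). Then |𝒻| ≤ C(n−1, 2) + 1, where C(a, b) denotes the binomial coefficient. -/
/-- A family `𝒻` shatters a set `S` if every subset of `S` is the trace of some member of `𝒻`. -/
def Shatters (𝒻 : Finset (Finset ℕ)) (S : Finset ℕ) : Prop :=
  ∀ T ⊆ S, ∃ F ∈ 𝒻, F ∩ S = T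

open Finset hiding Shatters

/-- Every pair inside a member of `Z` lies in a further member of `Z`. -/
def PairClosed (Z : Finset (Finset ℕ)) : Prop :=
  ∀ F ∈ Z, ∀ P ⊆ F, P.card = 2 → ∃ F' ∈ Z, F' ≠ F ∧ P ⊆ F'

theorem even_card_filter_symmDiff {α : Type*} [DecidableEq α] (A B : Finset α) (p : α → Prop)
    [DecidablePred p] (h : Odd #{x ∈ A | p x} ↔ Odd #{x ∈ B | p x}) :
    Even #{x ∈ symmDiff A B | p x} := by
  have hsplit : {x ∈ symmDiff A B | p x} = {x ∈ A | p x} \ {x ∈ B | p x} ∪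
      {x ∈ B | p x} \ {x ∈ A | p x} := by
    ext x; simp only [mem_filter, mem_symmDiff, mem_union, mem_sdiff]; tauto
  rw [hsplit, card_union_of_disjoint (disjoint_sdiff_sdiff)]
  have h1 := card_sdiff_add_card_inter {x ∈ A | p x} {x ∈ B | p x}
  have h2 := card_sdiff_add_card_inter {x ∈ B | p x} {x ∈ A | p x}
  rw [inter_comm] at h2
  grind

theorem even_sum_card_pair {V : Finset ℕ} {Z : Finset (Finset ℕ)} (hV : ∀ F ∈ Z, F ⊆ V)
    (h3 : ∀ F ∈ Z, F.card = 3) (v : ℕ) :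
    Even (∑ u ∈ V.erase v, #{F ∈ Z | {u, v} ⊆ F}) := by
  simp_rw [card_filter]
  rw [sum_comm]
  refine even_sum _ fun F hF => ?_
  rw [← card_filter]
  by_cases hv : v ∈ F
  · have : {u ∈ V.erase v | {u, v} ⊆ F} = F.erase v := by
      ext u
      have := @hV F hF u
      simp only [mem_filter, mem_erase, insert_subset_iff, singleton_subset_iff]
      tauto
    rw [this, card_erase_of_mem hv, h3 F hF]
    decide
  · have : {u ∈ V.erase v | {u, v} ⊆ F} = ∅ := by
      ext u
      simp [insert_subset_iff, hv]
    simp [this]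

theorem exists_pairClosed {V : Finset ℕ} {𝒢 : Finset (Finset ℕ)} (hV : ∀ F ∈ 𝒢, F ⊆ V)
    (h3 : ∀ F ∈ 𝒢, F.card = 3) (hcard : (V.card - 1).choose 2 < 𝒢.card) :
    ∃ Z ⊆ 𝒢, Z.Nonempty ∧ PairClosed Z := by
  obtain ⟨F₀, hF₀⟩ : 𝒢.Nonempty := card_pos.1 (by omega)
  obtain ⟨r, hr⟩ : F₀.Nonempty := card_pos.1 (by rw [h3 F₀ hF₀]; omega)
  have hrV := hV F₀ hF₀ hr
  obtain ⟨A, hA, B, hB, hne, heq⟩ := exists_ne_map_eq_of_card_lt_of_maps_to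
    (s := 𝒢.powerset) (t := ((V.erase r).powersetCard 2).powerset)
    (f := fun Z => {P ∈ (V.erase r).powersetCard 2 | Odd #{F ∈ Z | P ⊆ F}})
    (by
      rw [card_powerset, card_powerset, card_powersetCard, card_erase_of_mem hrV]
      exact Nat.pow_lt_pow_right (by omega) hcard)
    (fun Z _ => mem_coe.2 (mem_powerset.2 (filter_subset _ _)))
  rw [mem_powerset] at hA hB
  have hZ : symmDiff A B ⊆ 𝒢 := fun F hF => by
    rcases mem_symmDiff.1 hF with h | h
    exacts [hA h.1, hB h.1]
  have heven : ∀ P ∈ (V.erase r).powersetCard 2, Even #{F ∈ symmDiff A B | P ⊆ F} :=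
    fun P hP => even_card_filter_symmDiff A B _ (by
      have := congrArg (P ∈ ·) heq
      simpa [hP] using this)
  have hroot : ∀ v ∈ V.erase r, Even #{F ∈ symmDiff A B | {r, v} ⊆ F} := fun v hv => by
    have hsum := even_sum_card_pair (fun F hF => hV F (hZ hF)) (fun F hF => h3 F (hZ hF)) v
    have hrv : r ∈ V.erase v := by simp_all [eq_comm]
    rw [← add_sum_erase _ _ hrv, Nat.even_add] at hsum
    refine hsum.2 (even_sum _ fun u hu => heven _ ?_)
    simp only [mem_erase] at hu hv
    rw [mem_powersetCard, card_pair hu.2.1]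
    simp [insert_subset_iff, *]
  refine ⟨symmDiff A B, hZ, ?_, fun F hF P hPF hP => ?_⟩
  · rw [nonempty_iff_ne_empty]
    simpa using hne
  have hPe : Even #{F ∈ symmDiff A B | P ⊆ F} := by
    by_cases hrP : r ∈ P
    · obtain ⟨v, hv⟩ := card_eq_one.1 (show (P.erase r).card = 1 by
        rw [card_erase_of_mem hrP, hP])
      have hvP : v ∈ P.erase r := by simp [hv]
      have : P = {r, v} := by rw [← insert_erase hrP, hv]
      rw [this]
      exact hroot v (mem_erase.2 ⟨(mem_erase.1 hvP).1, hV F (hZ hF) (hPF (mem_erase.1 hvP).2)⟩)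
    · refine heven P (mem_powersetCard.2 ⟨fun x hx => mem_erase.2 ⟨?_, hV F (hZ hF) (hPF hx)⟩, hP⟩)
      rintro rfl
      exact hrP hx
  have hmem : F ∈ {F ∈ symmDiff A B | P ⊆ F} := mem_filter.2 ⟨hF, hPF⟩
  have hone : 1 < #{F ∈ symmDiff A B | P ⊆ F} := by
    have := card_pos.2 ⟨F, hmem⟩
    rcases hPe with ⟨k, hk⟩
    omega
  obtain ⟨F', hF', hne'⟩ := exists_mem_ne hone F
  exact ⟨F', (mem_filter.1 hF').1, hne', (mem_filter.1 hF').2⟩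

/-- `{a, b, c}` is a member of `𝒻`, with `a`, `b`, `c` distinct. -/
def Edge (𝒻 : Finset (Finset ℕ)) (a b c : ℕ) : Prop :=
  (a ≠ b ∧ a ≠ c ∧ b ≠ c) ∧ {a, b, c} ∈ 𝒻

theorem Edge.swap_left {𝒻 : Finset (Finset ℕ)} {a b c : ℕ} (h : Edge 𝒻 a b c) : Edge 𝒻 b a c :=
  ⟨by grind [Edge], by rw [insert_comm]; exact h.2⟩

theorem Edge.swap_right {𝒻 : Finset (Finset ℕ)} {a b c : ℕ} (h : Edge 𝒻 a b c) : Edge 𝒻 a c b :=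
  ⟨by grind [Edge], by rw [pair_comm]; exact h.2⟩

theorem exists_edge_of_mem {𝒻 : Finset (Finset ℕ)} {F : Finset ℕ} (hF : F ∈ 𝒻) (h3 : F.card = 3) :
    ∃ a b c, F = {a, b, c} ∧ Edge 𝒻 a b c := by
  obtain ⟨a, b, c, hab, hac, hbc, rfl⟩ := card_eq_three.1 h3
  exact ⟨a, b, c, rfl, ⟨hab, hac, hbc⟩, hF⟩

theorem PairClosed.exists_edge {Z : Finset (Finset ℕ)} (hZ : PairClosed Z)
    (h3 : ∀ F ∈ Z, F.card = 3) {a b c : ℕ} (h : Edge Z a b c) : ∃ d, d ≠ c ∧ Edge Z a b d := by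
  obtain ⟨F, hF, hne, hsub⟩ := hZ _ h.2 {a, b} (by grind) (card_pair h.1.1)
  obtain ⟨x, y, z, rfl, hxyz⟩ := exists_edge_of_mem hF (h3 F hF)
  have hd : ∃ d, ({x, y, z} : Finset ℕ) = {a, b, d} ∧ d ≠ a ∧ d ≠ b := by
    have ha : a ∈ ({x, y, z} : Finset ℕ) := hsub (by simp)
    have hb : b ∈ ({x, y, z} : Finset ℕ) := hsub (by simp)
    have := h.1.1
    have := hxyz.1
    simp only [mem_insert, mem_singleton] at ha hb
    rcases ha with rfl | rfl | rfl <;> rcases hb with rfl | rfl | rfl <;> 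
     first | contradiction | exact ⟨x, by grind⟩ | exact ⟨y, by grind⟩ | exact ⟨z, by grind⟩
  obtain ⟨d, hd, hda, hdb⟩ := hd
  rw [hd] at hF hne
  exact ⟨d, fun h => hne (by rw [h]), ⟨⟨h.1.1, hda.symm, hdb.symm⟩, hF⟩⟩

/-- Every edge at `a` meets `{b, c}`. -/
def CovAt (𝒻 : Finset (Finset ℕ)) (a b c : ℕ) : Prop :=
  ∀ d e, Edge 𝒻 a d e → d = b ∨ d = c ∨ e = b ∨ e = c

/-- Every edge meets `{a, b, c}`. -/
def CovAll (𝒻 : Finset (Finset ℕ)) (a b c : ℕ) : Prop :=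
  ∀ d e f, Edge 𝒻 d e f → d = a ∨ d = b ∨ d = c ∨ e = a ∨ e = b ∨ e = c ∨ f = a ∨ f = b ∨ f = c

/-- A family of triples of `V` none of whose members is shattered. -/
structure Unshattered (V : Finset ℕ) (𝒻 : Finset (Finset ℕ)) : Prop where
  subset : ∀ F ∈ 𝒻, F ⊆ V
  card_eq : ∀ F ∈ 𝒻, F.card = 3
  not_shatters : ∀ F ∈ 𝒻, ¬ Shatters 𝒻 F

theorem Unshattered.edge_cases {V : Finset ℕ} {𝒻 : Finset (Finset ℕ)} (h𝒻 : Unshattered V 𝒻)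
    {a b c : ℕ} (h : Edge 𝒻 a b c) :
    (∀ d, Edge 𝒻 a b d → d = c) ∨ (∀ d, Edge 𝒻 a c d → d = b) ∨ (∀ d, Edge 𝒻 b c d → d = a) ∨
      CovAt 𝒻 a b c ∨ CovAt 𝒻 b a c ∨ CovAt 𝒻 c a b ∨ CovAll 𝒻 a b c := by
  by_contra! hcon
  obtain ⟨⟨p, hp, hpc⟩, ⟨q, hq, hqb⟩, ⟨r, hr, hra⟩, ha, hb, hc, h0⟩ := hcon
  simp only [CovAt, CovAll] at ha hb hc h0
  push Not at ha hb hc h0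
  obtain ⟨a₁, a₂, ha, ha'⟩ := ha
  obtain ⟨b₁, b₂, hb, hb'⟩ := hb
  obtain ⟨c₁, c₂, hc, hc'⟩ := hc
  obtain ⟨z₁, z₂, z₃, hz, hz'⟩ := h0
  refine h𝒻.not_shatters _ h.2 fun T hT => ?_
  have hT' : ∀ x, x ∈ T → x = a ∨ x = b ∨ x = c := fun x hx => by simpa using hT hx
  have := h.1
  by_cases hTa : a ∈ T <;> by_cases hTb : b ∈ T <;> by_cases hTc : c ∈ T
  · exact ⟨_, h.2, by grind⟩
  · exact ⟨_, hp.2, by have := hp.1; ext x; simp only [mem_inter, mem_insert, mem_singleton]; grind⟩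
  · exact ⟨_, hq.2, by have := hq.1; ext x; simp only [mem_inter, mem_insert, mem_singleton]; grind⟩
  · exact ⟨_, ha.2, by have := ha.1; ext x; simp only [mem_inter, mem_insert, mem_singleton]; grind⟩
  · exact ⟨_, hr.2, by have := hr.1; ext x; simp only [mem_inter, mem_insert, mem_singleton]; grind⟩
  · exact ⟨_, hb.2, by have := hb.1; ext x; simp only [mem_inter, mem_insert, mem_singleton]; grind⟩
  · exact ⟨_, hc.2, by have := hc.1; ext x; simp only [mem_inter, mem_insert, mem_singleton]; grind⟩
  · exact ⟨_, hz.2, by have := hz.1; ext x; simp only [mem_inter, mem_insert, mem_singleton]; grind⟩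

/-- The triples `p < q < r < 7` in lexicographic order. -/
def triples : List (ℕ × ℕ × ℕ) :=
  (List.range 7).flatMap fun p => (List.range 7).flatMap fun q => (List.range 7).filterMap fun r =>
    if p < q ∧ q < r then some (p, q, r) else none

/-- The indicator vector of the intersection of two triples, read along the first one. -/
def traceOn (t u : ℕ × ℕ × ℕ) : Bool × Bool × Bool :=
  let has v := u.1.beq v || u.2.1.beq v || u.2.2.beq v
  (has t.1, has t.2.1, has t.2.2)

/-- The set of positions of a list at which `P` holds, as a bit mask. -/
def maskOf {α : Type} (P : α → Bool) : List α → ℕ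
  | [] => 0
  | t :: l => (maskOf P l).bit (P t)

/-- For each `pat` in `pats`, the bit mask of the triples whose trace on `t` is `pat`. -/
def traceMasks (pats : List (Bool × Bool × Bool)) (t : ℕ × ℕ × ℕ) : List ℕ :=
  pats.map fun pat => maskOf (fun u => traceOn t u == pat) triples

/-- The traces of size at most one. -/
def smallTraces : List (Bool × Bool × Bool) :=
  [(false, false, false), (true, false, false), (false, true, false), (false, false, true)]

/-- The traces of size two. -/
def pairTraces : List (Bool × Bool × Bool) :=
  [(true, true, false), (true, false, true), (false, true, true)]

/-! The search below runs inside the kernel; recursors in place of pattern matching, and `forceNat`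
for the arguments of recursive calls, keep its evaluation cheap. -/

noncomputable section

/-- `x` has more than `t` binary digits `1`. -/
def manyBits (t : ℕ) : ℕ → Bool :=
  t.rec (fun x => !x.beq 0) fun _ ih x => x.rec false fun y _ => ih (y.succ.land y)

/-- `if b then x else y`. -/
def select {α : Type} (b : Bool) (x y : α) : α := b.rec y x

/-- `f n`, evaluating `n` first. -/
def forceNat {α : Type} (n : ℕ) (f : ℕ → α) : α := n.rec (f 0) fun m _ => f m.succ

/-- One of the masks `ks` is contained in `out`. -/
def anyInside (out : ℕ) (ks : List ℕ) : Bool :=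
  ks.rec false fun k _ ih => select ((k.land out).beq k) true ih

/-- The masks of the first item meeting `inn` none of whose masks is inside `out`. -/
def pick (inn out : ℕ) (items : List (ℕ × List ℕ)) : Option (List ℕ) :=
  items.rec none fun p _ ih =>
    select ((p.1.land inn).beq 0) ih (select (anyInside out p.2) ih (some p.2))

/-- A backtracking search over the families containing `inn`, avoiding `out` and, for each item they
meet, avoiding one of its masks; `true` means that each of them misses more than `18` triples. -/
def search (items : List (ℕ × List ℕ)) (fuel : ℕ) : ℕ → ℕ → Bool :=
  fuel.rec (fun _ _ => false) fun _ ih inn out =>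
    select (manyBits 18 out) true
      ((pick inn out items).rec
        (forceNat (Nat.pow 2 (Nat.xor 34359738367 (inn.lor out)).log2) fun b =>
          select (forceNat (inn.lor b) fun inn' => ih inn' out)
            (forceNat (out.lor b) fun out' => ih inn out') false)
        fun ks => ks.rec true fun k _ ihk =>
          select (select ((k.land inn).beq 0) (forceNat (out.lor k) fun out' => ih inn out') true)
            ihk false)

/-- No family of at least `17` triples without shattered members contains the triples `ins`, with
all their pair traces, and avoids the traces `outs`. -/
def refutes (ins : List (ℕ × ℕ × ℕ)) (outs : List ((ℕ × ℕ × ℕ) × Bool × Bool × Bool)) : Bool :=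
  search (ins.map (fun t => (maskOf (· == t) triples, traceMasks smallTraces t)) ++
    triples.map fun t => (maskOf (· == t) triples, traceMasks (smallTraces ++ pairTraces) t)) 20
    (maskOf (ins.contains ·) triples)
    (maskOf (fun u => outs.any fun p => traceOn p.1 u == p.2) triples)

end

theorem select_eq {α : Type} (b : Bool) (x y : α) : select b x y = if b then x else y := by
  cases b <;> rfl

theorem forceNat_eq {α : Type} (n : ℕ) (f : ℕ → α) : forceNat n f = f n := by
  cases n <;> rfl

theorem lt_card_of_manyBits {t x : ℕ} (h : manyBits t x = true) {B : Finset ℕ}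
    (hB : ∀ j, x.testBit j → j ∈ B) : t < B.card := by
  induction t generalizing x B with
  | zero =>
    have hx : x ≠ 0 := by
      rintro rfl
      exact absurd h (by decide)
    obtain ⟨j, hj⟩ := Nat.exists_testBit_of_ne_zero hx
    exact card_pos.2 ⟨j, hB j hj⟩
  | succ t ih =>
    cases x with
    | zero => exact absurd h (by simp [manyBits])
    | succ y =>
      have hy : (y + 1).land y ≠ y + 1 := by
        have : (y + 1).land y ≤ y := Nat.and_le_right
        omega
      obtain ⟨j, hj⟩ : ∃ j, ((y + 1).land y).testBit j ≠ (y + 1).testBit j := by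
        by_contra! hcon
        exact hy (Nat.eq_of_testBit_eq hcon)
      have hland : ∀ i, ((y + 1).land y).testBit i = ((y + 1).testBit i && y.testBit i) :=
        fun i => Nat.testBit_and _ _ i
      have hj' : j ∈ B := hB j (by grind)
      have := ih (x := (y + 1).land y) (B := B.erase j) h fun i hi => by grind
      rw [card_erase_of_mem hj'] at this
      omega

theorem pick_eq_some {inn out : ℕ} {items : List (ℕ × List ℕ)} {ks : List ℕ}
    (h : pick inn out items = some ks) : ∃ b, (b, ks) ∈ items ∧ b.land inn ≠ 0 := by
  induction items with
  | nil => exact absurd h (by simp [pick])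
  | cons p l ih =>
    change select ((p.1.land inn).beq 0) (pick inn out l)
      (select (anyInside out p.2) (pick inn out l) (some p.2)) = some ks at h
    simp only [select_eq] at h
    split_ifs at h with h1 h2
    · exact (ih h).imp fun b hb => ⟨List.mem_cons_of_mem _ hb.1, hb.2⟩
    · exact (ih h).imp fun b hb => ⟨List.mem_cons_of_mem _ hb.1, hb.2⟩
    · refine ⟨p.1, ?_, by simpa using h1⟩
      rw [← Option.some.inj h]
      exact List.mem_cons_self

theorem exists_testBit_of_land_ne_zero {m n : ℕ} (h : m.land n ≠ 0) :
    ∃ j, m.testBit j ∧ n.testBit j := by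
  obtain ⟨j, hj⟩ := Nat.exists_testBit_of_ne_zero h
  exact ⟨j, by simpa using (Nat.testBit_and m n j).symm.trans hj⟩

theorem testBit_lor {m n j : ℕ} (h : (m.lor n).testBit j) : m.testBit j ∨ n.testBit j := by
  simpa using (Nat.testBit_or m n j).symm.trans h

theorem testBit_two_pow' {i j : ℕ} (h : (Nat.pow 2 i).testBit j) : i = j := by
  simpa using (Nat.testBit_two_pow (n := i) (m := j)).symm.trans h

theorem search_sound {items : List (ℕ × List ℕ)} {s : ℕ → Prop} {B : Finset ℕ}
    (hB : ∀ j, ¬ s j → j ∈ B) (hBcard : B.card ≤ 18)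
    (hitems : ∀ p ∈ items, ∀ j, p.1.testBit j → s j → ∃ k ∈ p.2, ∀ i, k.testBit i → ¬ s i)
    {fuel inn out : ℕ} (hinn : ∀ j, inn.testBit j → s j) (hout : ∀ j, out.testBit j → ¬ s j) :
    search items fuel inn out = false := by
  induction fuel generalizing inn out with
  | zero => rfl
  | succ f ih =>
    change select (manyBits 18 out) true ((pick inn out items).rec
        (forceNat (Nat.pow 2 (Nat.xor 34359738367 (inn.lor out)).log2) fun b =>
          select (forceNat (inn.lor b) fun inn' => search items f inn' out)
            (forceNat (out.lor b) fun out' => search items f inn out') false)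
        fun ks => ks.rec true fun k _ ihk => select (select ((k.land inn).beq 0)
            (forceNat (out.lor k) fun out' => search items f inn out') true) ihk false) = false
    have hmany : manyBits 18 out = false := by
      by_contra hcon
      have := lt_card_of_manyBits (Bool.eq_true_of_not_eq_false hcon) fun j hj => hB j (hout j hj)
      omega
    rw [hmany, select_eq, if_neg (by simp)]
    cases hpick : pick inn out items with
    | none =>
      simp only [forceNat_eq, select_eq]
      set i := (Nat.xor 34359738367 (inn.lor out)).log2
      by_cases hs : s i
      · rw [ih (inn := inn.lor (Nat.pow 2 i)) _ hout]
        · rfl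
        · intro j hj
          rcases testBit_lor hj with hj | hj
          exacts [hinn j hj, testBit_two_pow' hj ▸ hs]
      · rw [ih (out := out.lor (Nat.pow 2 i)) hinn]
        · simp
        · intro j hj
          rcases testBit_lor hj with hj | hj
          exacts [hout j hj, testBit_two_pow' hj ▸ hs]
    | some ks =>
      obtain ⟨b, hb, hbinn⟩ := pick_eq_some hpick
      obtain ⟨j, hj, hj'⟩ := exists_testBit_of_land_ne_zero hbinn
      obtain ⟨k, hk, hks⟩ := hitems _ hb j hj (hinn j hj')
      simp only at hk ⊢
      clear hb hpick
      induction ks with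
      | nil => simp at hk
      | cons k' ks ihks =>
        simp only [forceNat_eq, select_eq] at ihks ⊢
        rcases List.mem_cons.1 hk with rfl | hk
        · have h0 : k.land inn = 0 := by
            by_contra hne
            obtain ⟨i, hi, hi'⟩ := exists_testBit_of_land_ne_zero hne
            exact hks i hi (hinn i hi')
          rw [h0, ih (out := out.lor k) hinn]
          · rfl
          · intro i hi
            rcases testBit_lor hi with hi | hi
            exacts [hout i hi, hks i hi]
        · rw [ihks hk]
          simp

theorem testBit_maskOf {α : Type} {P : α → Bool} {l : List α} {j : ℕ}
    (h : (maskOf P l).testBit j) : ∃ t, l[j]? = some t ∧ P t = true := by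
  induction l generalizing j with
  | nil => simp [maskOf] at h
  | cons t l ih =>
    cases j with
    | zero => exact ⟨t, rfl, by simpa [maskOf] using h⟩
    | succ j =>
      obtain ⟨u, hu⟩ := ih (j := j) (by simpa [maskOf, Nat.testBit_bit_succ] using h)
      exact ⟨u, by simpa using hu⟩

/-- The image of a triple under a labelling of the vertices. -/
def label (e : ℕ → ℕ) (t : ℕ × ℕ × ℕ) : Finset ℕ := {e t.1, e t.2.1, e t.2.2}

theorem triples_lt {t : ℕ × ℕ × ℕ} (ht : t ∈ triples) :
    t.1 < t.2.1 ∧ t.2.1 < t.2.2 ∧ t.2.2 < 7 := by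
  revert t
  decide +kernel

theorem exists_triples_eq : ∀ p < 7, ∀ q < 7, ∀ r < 7, p ≠ q → p ≠ r → q ≠ r →
    ∃ t ∈ triples, ({p, q, r} : Finset ℕ) = {t.1, t.2.1, t.2.2} := by
  intro p hp q hq r hr hpq hpr hqr
  have key : ∀ r < 7, ∀ q < r, ∀ p < q, (p, q, r) ∈ triples := by
    intro r hr q hq p hp
    simp only [triples, List.mem_flatMap, List.mem_filterMap, List.mem_range]
    exact ⟨p, by omega, q, by omega, r, hr, by simp [hp, hq]⟩
  rcases lt_or_gt_of_ne hpq with h1 | h1 <;> rcases lt_or_gt_of_ne hpr with h2 | h2 <;>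
    rcases lt_or_gt_of_ne hqr with h3 | h3
  · exact ⟨_, key r hr q h3 p h1, rfl⟩
  · exact ⟨_, key q hq r h3 p h2, by grind⟩
  · omega
  · exact ⟨_, key q hq p h1 r h2, by grind⟩
  · exact ⟨_, key r hr p h2 q h1, by grind⟩
  · omega
  · exact ⟨_, key p hp r h2 q h3, by grind⟩
  · exact ⟨_, key p hp q h1 r h3, by grind⟩

theorem label_inter_label {e : ℕ → ℕ} (he : Set.InjOn e (Set.Iio 7)) {t u : ℕ × ℕ × ℕ}
    (ht : t ∈ triples) (hu : u ∈ triples) {T : Finset ℕ} (hT : T ⊆ label e t)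
    (htr : traceOn t u = (decide (e t.1 ∈ T), decide (e t.2.1 ∈ T), decide (e t.2.2 ∈ T))) :
    label e u ∩ label e t = T := by
  have ht' := triples_lt ht
  have hu' := triples_lt hu
  have hinj : ∀ i < 7, ∀ j < 7, e i = e j → i = j := fun i hi j hj h => he hi hj h
  have hmem : ∀ v < 7, e v ∈ label e u ↔ (u.1 = v ∨ u.2.1 = v ∨ u.2.2 = v) := by
    intro v hv
    simp only [label, mem_insert, mem_singleton]
    grind
  simp only [traceOn, Prod.mk.injEq] at htr
  have hiff : ∀ {a b c v : ℕ} {P : Prop} [Decidable P],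
      (a.beq v || b.beq v || c.beq v) = decide P → ((a = v ∨ b = v ∨ c = v) ↔ P) := by
    intro a b c v P _ h
    rw [Bool.eq_iff_iff, decide_eq_true_eq] at h
    simpa [or_assoc] using h
  have h1 := hmem t.1 (by omega)
  have h2 := hmem t.2.1 (by omega)
  have h3 := hmem t.2.2 (by omega)
  rw [hiff htr.1] at h1
  rw [hiff htr.2.1] at h2
  rw [hiff htr.2.2] at h3
  ext x
  rw [mem_inter]
  constructor
  · rintro ⟨hx, hxt⟩
    simp only [label, mem_insert, mem_singleton] at hxt
    rcases hxt with rfl | rfl | rfl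
    exacts [h1.1 hx, h2.1 hx, h3.1 hx]
  · intro hx
    refine ⟨?_, hT hx⟩
    have hxt := hT hx
    simp only [label, mem_insert, mem_singleton] at hxt
    rcases hxt with rfl | rfl | rfl
    exacts [h1.2 hx, h2.2 hx, h3.2 hx]

theorem Unshattered.exists_missing_trace {V : Finset ℕ} {𝒻 : Finset (Finset ℕ)}
    (h𝒻 : Unshattered V 𝒻) {e : ℕ → ℕ} (he : Set.InjOn e (Set.Iio 7)) {t : ℕ × ℕ × ℕ}
    (ht : t ∈ triples) (htf : label e t ∈ 𝒻) :
    ∃ pat ∈ smallTraces ++ pairTraces, ∀ u ∈ triples, traceOn t u = pat → label e u ∉ 𝒻 := by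
  have hns := h𝒻.not_shatters _ htf
  simp only [Shatters] at hns
  push Not at hns
  obtain ⟨T, hT, hTF⟩ := hns
  refine ⟨_, ?_, fun u hu htr huf => hTF _ huf (label_inter_label he ht hu hT htr)⟩
  have hne : ¬ (e t.1 ∈ T ∧ e t.2.1 ∈ T ∧ e t.2.2 ∈ T) := fun ⟨h1, h2, h3⟩ =>
    hTF _ htf (by rw [inter_self]; exact Subset.antisymm (by simp [label, insert_subset_iff, *]) hT)
  by_cases h1 : e t.1 ∈ T <;> by_cases h2 : e t.2.1 ∈ T <;> by_cases h3 : e t.2.2 ∈ T <;>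
    simp_all [smallTraces, pairTraces]

theorem Unshattered.exists_missing_small_trace {V : Finset ℕ} {𝒻 Z : Finset (Finset ℕ)}
    (h𝒻 : Unshattered V 𝒻) (hZ𝒻 : Z ⊆ 𝒻) (hZ : PairClosed Z) {e : ℕ → ℕ}
    (he : Set.InjOn e (Set.Iio 7)) {t : ℕ × ℕ × ℕ} (ht : t ∈ triples)
    (htZ : Edge Z (e t.1) (e t.2.1) (e t.2.2)) :
    ∃ pat ∈ smallTraces, ∀ u ∈ triples, traceOn t u = pat → label e u ∉ 𝒻 := by
  have hns := h𝒻.not_shatters _ (hZ𝒻 htZ.2)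
  have hZ3 : ∀ F ∈ Z, F.card = 3 := fun F hF => h𝒻.card_eq F (hZ𝒻 hF)
  simp only [Shatters] at hns
  push Not at hns
  obtain ⟨T, hT, hTF⟩ := hns
  refine ⟨_, ?_, fun u hu htr huf => hTF _ huf (label_inter_label he ht hu hT htr)⟩
  obtain ⟨c, hc, hce⟩ := hZ.exists_edge hZ3 htZ
  obtain ⟨b, hb, hbe⟩ := hZ.exists_edge hZ3 htZ.swap_right
  obtain ⟨a, ha, hae⟩ := hZ.exists_edge hZ3 htZ.swap_left.swap_right
  have hd := htZ.1
  have hda := hae.1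
  have hdb := hbe.1
  have hdc := hce.1
  have hT' : ∀ x, x ∈ T → x = e t.1 ∨ x = e t.2.1 ∨ x = e t.2.2 := fun x hx => by
    simpa using hT hx
  have hall := hTF _ (hZ𝒻 htZ.2)
  have hna := hTF _ (hZ𝒻 hae.2)
  have hnb := hTF _ (hZ𝒻 hbe.2)
  have hnc := hTF _ (hZ𝒻 hce.2)
  by_cases h1 : e t.1 ∈ T <;> by_cases h2 : e t.2.1 ∈ T <;> by_cases h3 : e t.2.2 ∈ T
  · exact absurd (by grind) hall
  · exact absurd (by ext x; simp only [mem_inter, mem_insert, mem_singleton]; grind) hnc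
  · exact absurd (by ext x; simp only [mem_inter, mem_insert, mem_singleton]; grind) hnb
  · simp [smallTraces, *]
  · exact absurd (by ext x; simp only [mem_inter, mem_insert, mem_singleton]; grind) hna
  all_goals simp [smallTraces, *]

theorem refutes_eq_false {V : Finset ℕ} {𝒻 Z : Finset (Finset ℕ)} (h𝒻 : Unshattered V 𝒻)
    (hcard : 17 ≤ 𝒻.card) (hZ𝒻 : Z ⊆ 𝒻) (hZ : PairClosed Z) {e : ℕ → ℕ}
    (he : Set.InjOn e (Set.Iio 7)) (hV : V ⊆ (range 7).image e) {ins : List (ℕ × ℕ × ℕ)}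
    {outs : List ((ℕ × ℕ × ℕ) × Bool × Bool × Bool)}
    (hins : ∀ t ∈ ins, Edge Z (e t.1) (e t.2.1) (e t.2.2))
    (houts : ∀ p ∈ outs, ∀ u ∈ triples, traceOn p.1 u = p.2 → label e u ∉ 𝒻) :
    refutes ins outs = false := by
  set s : ℕ → Prop := fun j => ∀ t, triples[j]? = some t → label e t ∈ 𝒻 with hs
  classical
  have hnot : ∀ {j u}, triples[j]? = some u → label e u ∉ 𝒻 → ¬ s j := fun hj hu h => hu (h _ hj)
  have hB : ∀ j, ¬ s j → j ∈ {j ∈ range 35 | ¬ s j} := by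
    intro j hj
    refine mem_filter.2 ⟨?_, hj⟩
    simp only [hs] at hj
    push Not at hj
    obtain ⟨t, ht, -⟩ := hj
    exact mem_range.2 (List.getElem?_eq_some_iff.1 ht).1
  have hsub : 𝒻 ⊆ {j ∈ range 35 | s j}.image fun j => label e (triples.getD j default) := by
    intro F hF
    obtain ⟨a, b, c, rfl, ⟨hab, hac, hbc⟩, -⟩ := exists_edge_of_mem hF (h𝒻.card_eq F hF)
    have hmem : ∀ x ∈ ({a, b, c} : Finset ℕ), ∃ i < 7, e i = x := fun x hx => by
      simpa using hV (h𝒻.subset _ hF hx)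
    obtain ⟨p, hp, rfl⟩ := hmem a (by simp)
    obtain ⟨q, hq, rfl⟩ := hmem b (by simp)
    obtain ⟨r, hr, rfl⟩ := hmem c (by simp)
    obtain ⟨t, ht, heq⟩ := exists_triples_eq p hp q hq r hr (by grind) (by grind) (by grind)
    obtain ⟨j, hj, rfl⟩ := List.mem_iff_getElem.1 ht
    have hl : ({e p, e q, e r} : Finset ℕ) = label e triples[j] := by
      simpa [label, image_insert] using congrArg (image e) heq
    refine mem_image.2 ⟨j, mem_filter.2 ⟨mem_range.2 hj, ?_⟩, ?_⟩
    · intro t ht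
      rw [List.getElem?_eq_getElem hj, Option.some.injEq] at ht
      rw [← ht, ← hl]
      exact hF
    · simp [hl, List.getD, hj]
  have hBcard : #{j ∈ range 35 | ¬ s j} ≤ 18 := by
    have h1 := (card_le_card hsub).trans card_image_le
    have h2 : #{j ∈ range 35 | s j} + #{j ∈ range 35 | ¬ s j} = 35 := by
      convert card_filter_add_card_filter_not (s := range 35) s
      simp
    omega
  have htriples : ∀ {j t}, triples[j]? = some t → t ∈ triples := fun h => List.mem_of_getElem? h
  refine search_sound (s := s) hB hBcard ?_ ?_ ?_
  · intro p hp j hj hsj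
    have key : ∀ {pats t pat}, pat ∈ pats →
        (∀ u ∈ triples, traceOn t u = pat → label e u ∉ 𝒻) →
        ∃ k ∈ traceMasks pats t, ∀ i, k.testBit i → ¬ s i := by
      intro pats t pat hpat hu
      refine ⟨_, List.mem_map.2 ⟨pat, hpat, rfl⟩, fun i hi => ?_⟩
      obtain ⟨u, hui, hup⟩ := testBit_maskOf hi
      exact hnot hui (hu u (htriples hui) (by simpa using hup))
    rcases List.mem_append.1 hp with hp | hp <;> obtain ⟨t, ht, rfl⟩ := List.mem_map.1 hp <;>
      obtain ⟨t', htj, htt⟩ := testBit_maskOf hj <;> obtain rfl : t' = t := by simpa using htt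
    · obtain ⟨pat, hpat, hu⟩ := h𝒻.exists_missing_small_trace hZ𝒻 hZ he (htriples htj) (hins _ ht)
      exact key hpat hu
    · obtain ⟨pat, hpat, hu⟩ := h𝒻.exists_missing_trace he (htriples htj) (hsj _ htj)
      exact key hpat hu
  · intro j hj t ht
    obtain ⟨t', ht', htt⟩ := testBit_maskOf hj
    obtain rfl : t' = t := Option.some.inj (ht'.symm.trans ht)
    exact hZ𝒻 (hins t' (by simpa using htt)).2
  · intro j hj
    obtain ⟨u, huj, hu⟩ := testBit_maskOf hj
    obtain ⟨p, hp, hup⟩ := List.any_eq_true.1 hu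
    exact hnot huj (houts p hp u (htriples huj) (by simpa using hup))

theorem CovAt.mem_or_mem {𝒻 : Finset (Finset ℕ)} {a b c : ℕ} (h : CovAt 𝒻 a b c) {F : Finset ℕ}
    (hF : F ∈ 𝒻) (h3 : F.card = 3) (ha : a ∈ F) : b ∈ F ∨ c ∈ F := by
  obtain ⟨x, y, z, rfl, he⟩ := exists_edge_of_mem hF h3
  simp only [mem_insert, mem_singleton] at ha ⊢
  rcases ha with rfl | rfl | rfl
  · grind [h _ _ he]
  · grind [h _ _ he.swap_left]
  · grind [h _ _ he.swap_right.swap_left]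

theorem CovAll.mem_or_mem {𝒻 : Finset (Finset ℕ)} {a b c : ℕ} (h : CovAll 𝒻 a b c) {F : Finset ℕ}
    (hF : F ∈ 𝒻) (h3 : F.card = 3) : a ∈ F ∨ b ∈ F ∨ c ∈ F := by
  obtain ⟨x, y, z, rfl, he⟩ := exists_edge_of_mem hF h3
  have := h _ _ _ he
  simp only [mem_insert, mem_singleton]
  grind

theorem Edge.mono {𝒻 Z : Finset (Finset ℕ)} (hZ : Z ⊆ 𝒻) {a b c : ℕ} (h : Edge Z a b c) :
    Edge 𝒻 a b c := ⟨h.1, hZ h.2⟩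

theorem Unshattered.mem_of_edge {V : Finset ℕ} {𝒻 : Finset (Finset ℕ)} (h𝒻 : Unshattered V 𝒻)
    {a b c : ℕ} (h : Edge 𝒻 a b c) : a ∈ V ∧ b ∈ V ∧ c ∈ V := by
  simpa [insert_subset_iff] using h𝒻.subset _ h.2

theorem Unshattered.edge_cases_of_pairClosed {V : Finset ℕ} {𝒻 Z : Finset (Finset ℕ)}
    (h𝒻 : Unshattered V 𝒻) (hZ𝒻 : Z ⊆ 𝒻) (hZ : PairClosed Z) {a b c : ℕ} (h : Edge Z a b c) :
    CovAt 𝒻 a b c ∨ CovAt 𝒻 b a c ∨ CovAt 𝒻 c a b ∨ CovAll 𝒻 a b c := by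
  have hZ3 : ∀ F ∈ Z, F.card = 3 := fun F hF => h𝒻.card_eq F (hZ𝒻 hF)
  rcases h𝒻.edge_cases (h.mono hZ𝒻) with h1 | h1 | h1 | h1
  · obtain ⟨d, hd, he⟩ := hZ.exists_edge hZ3 h
    exact absurd (h1 d (he.mono hZ𝒻)) hd
  · obtain ⟨d, hd, he⟩ := hZ.exists_edge hZ3 h.swap_right
    exact absurd (h1 d (he.mono hZ𝒻)) hd
  · obtain ⟨d, hd, he⟩ := hZ.exists_edge hZ3 h.swap_left.swap_right
    exact absurd (h1 d (he.mono hZ𝒻)) hd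
  · exact h1

theorem exists_labelling {V : Finset ℕ} {m : ℕ} (hV : V.card = m) {l : List ℕ} (hl : l.Nodup)
    (hlV : ∀ x ∈ l, x ∈ V) : ∃ e : ℕ → ℕ, (∀ i < l.length, e i = l.getD i 0) ∧
      Set.InjOn e (Set.Iio m) ∧ V ⊆ (range m).image e := by
  set L := l ++ (V \ l.toFinset).toList with hL
  have hLV : ∀ x, x ∈ V ↔ x ∈ L := fun x => by
    simp only [hL, List.mem_append, mem_toList, mem_sdiff, List.mem_toFinset]
    have := hlV x
    tauto
  have hLn : L.Nodup := by
    refine List.nodup_append.2 ⟨hl, nodup_toList _, ?_⟩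
    rintro a ha b hb rfl
    exact (mem_sdiff.1 (mem_toList.1 hb)).2 (List.mem_toFinset.2 ha)
  have hlen : L.length = m := by
    rw [← hV, show V = L.toFinset from by ext x; simp [hLV], List.toFinset_card_of_nodup hLn]
  refine ⟨fun i => L.getD i 0, fun i hi => ?_, fun i hi j hj hij => ?_, fun x hx => ?_⟩
  · simp [hL, List.getD, List.getElem?_append_left hi]
  · rw [Set.mem_Iio, ← hlen] at hi hj
    simp only [List.getD_eq_getElem _ _ hi, List.getD_eq_getElem _ _ hj] at hij
    exact (hLn.getElem_inj_iff).1 hij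
  · obtain ⟨i, hi, rfl⟩ := List.mem_iff_getElem.1 ((hLV x).1 hx)
    exact mem_image.2 ⟨i, mem_range.2 (hlen ▸ hi), List.getD_eq_getElem _ _ hi⟩

/-- The certificate for a pair-closed tetrahedron, one of whose triples `012` has every edge at `0`
meeting `{1, 2}`. -/
theorem refutes_tetrahedron_covAt : refutes [(0, 1, 2), (0, 1, 3), (0, 2, 3), (1, 2, 3)]
    [((0, 1, 2), true, false, false)] = true := by
  decide +kernel

theorem refutes_bent_covAt : refutes [(0, 1, 2), (0, 1, 3), (0, 2, 3), (1, 2, 4)]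
    [((0, 1, 2), true, false, false)] = true := by
  decide +kernel

theorem refutes_tetrahedron_covAll : refutes [(0, 1, 2), (0, 1, 3), (0, 2, 3), (1, 2, 3)]
    ([(0, 1, 2), (0, 1, 3), (0, 2, 3), (1, 2, 3)].map (·, false, false, false)) = true := by
  decide +kernel

theorem refutes_bent_covAll : refutes [(0, 1, 2), (0, 1, 3), (0, 2, 3), (1, 2, 4)]
    ([(0, 1, 2), (0, 1, 3), (0, 2, 3), (1, 2, 4)].map (·, false, false, false)) = true := by
  decide +kernel

theorem refutes_spread_covAll : refutes [(0, 1, 2), (0, 1, 3), (0, 2, 4), (1, 2, 5)]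
    ([(0, 1, 2), (0, 1, 3), (0, 2, 4), (1, 2, 5)].map (·, false, false, false)) = true := by
  decide +kernel

section

variable {V : Finset ℕ} {𝒻 Z : Finset (Finset ℕ)} {e : ℕ → ℕ}

theorem label_notMem_of_covAt (h𝒻 : Unshattered V 𝒻) (he : Set.InjOn e (Set.Iio 7))
    (hcov : CovAt 𝒻 (e 0) (e 1) (e 2)) {u : ℕ × ℕ × ℕ} (hu : u ∈ triples)
    (htr : traceOn (0, 1, 2) u = (true, false, false)) : label e u ∉ 𝒻 := by
  intro huf
  have hinj : ∀ i < 7, ∀ j < 7, e i = e j → i = j := fun i hi j hj h => he hi hj h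
  have h01 := hinj 0 (by omega) 1 (by omega)
  have h02 := hinj 0 (by omega) 2 (by omega)
  have hint := label_inter_label he (t := (0, 1, 2)) (by decide) hu (T := {e 0}) (by simp [label])
    (by rw [htr]; simp only [mem_singleton]; grind)
  have h0 : e 0 ∈ label e u ∩ label e (0, 1, 2) := by simp [hint]
  have hmem : ∀ v, e v ∈ label e (0, 1, 2) → e v ∈ label e u → e v = e 0 := fun v h1 h2 => by
    simpa [hint] using mem_inter.2 ⟨h2, h1⟩
  rcases hcov.mem_or_mem huf (h𝒻.card_eq _ huf) (mem_inter.1 h0).1 with h | h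
  · exact absurd (h01 (hmem 1 (by simp [label]) h).symm) (by omega)
  · exact absurd (h02 (hmem 2 (by simp [label]) h).symm) (by omega)

theorem label_notMem_of_covAll (h𝒻 : Unshattered V 𝒻) (he : Set.InjOn e (Set.Iio 7))
    {t : ℕ × ℕ × ℕ} (ht : t ∈ triples) (hcov : CovAll 𝒻 (e t.1) (e t.2.1) (e t.2.2))
    {u : ℕ × ℕ × ℕ} (hu : u ∈ triples) (htr : traceOn t u = (false, false, false)) :
    label e u ∉ 𝒻 := by
  intro huf
  have hint := label_inter_label he ht hu (empty_subset _) (by simpa using htr)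
  have hmem : ∀ v, v ∈ label e t → v ∉ label e u := fun v h1 h2 => by
    simpa [hint] using mem_inter.2 ⟨h2, h1⟩
  rcases hcov.mem_or_mem huf (h𝒻.card_eq _ huf) with h | h | h
  all_goals exact hmem _ (by simp [label]) h

theorem false_of_covAt (h𝒻 : Unshattered V 𝒻) (hV : V.card = 7) (hcard : 17 ≤ 𝒻.card)
    (hZ𝒻 : Z ⊆ 𝒻) (hZ : PairClosed Z) {a b c : ℕ} (h : Edge Z a b c) (hcov : CovAt 𝒻 a b c) :
    False := by
  have hZ3 : ∀ F ∈ Z, F.card = 3 := fun F hF => h𝒻.card_eq F (hZ𝒻 hF)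
  obtain ⟨x, hxc, hx⟩ := hZ.exists_edge hZ3 h
  obtain ⟨c', hc', hxy⟩ := hZ.exists_edge hZ3 hx.swap_right
  obtain rfl : c = c' := by grind [hcov _ _ (hxy.mono hZ𝒻), Edge]
  obtain ⟨y, hya, hy⟩ := hZ.exists_edge hZ3 h.swap_left.swap_right
  have hVabc := h𝒻.mem_of_edge (h.mono hZ𝒻)
  have hVx := (h𝒻.mem_of_edge (hx.mono hZ𝒻)).2.2
  have hVy := (h𝒻.mem_of_edge (hy.mono hZ𝒻)).2.2
  have hd := h.1
  have hdx := hx.1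
  have hdxy := hxy.1
  have hdy := hy.1
  by_cases hyx : y = x
  · subst hyx
    obtain ⟨e, hel, he, hVe⟩ := exists_labelling hV (l := [a, b, c, y]) (by grind) (by grind)
    have h0 : e 0 = a := hel 0 (by simp)
    have h1 : e 1 = b := hel 1 (by simp)
    have h2 : e 2 = c := hel 2 (by simp)
    have h3 : e 3 = y := hel 3 (by simp)
    have := refutes_eq_false h𝒻 hcard hZ𝒻 hZ he hVe (ins := [(0, 1, 2), (0, 1, 3), (0, 2, 3), (1, 2, 3)])
      (outs := [((0, 1, 2), true, false, false)])
      (by simp only [List.forall_mem_cons, h0, h1, h2, h3]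
          exact ⟨h, hx, hxy.swap_right, hy, by simp⟩)
      (by simpa using fun _ _ _ => label_notMem_of_covAt h𝒻 he (by rwa [h0, h1, h2]))
    exact absurd (refutes_tetrahedron_covAt.symm.trans this) (by simp)
  · obtain ⟨e, hel, he, hVe⟩ := exists_labelling hV (l := [a, b, c, x, y]) (by grind) (by grind)
    have h0 : e 0 = a := hel 0 (by simp)
    have h1 : e 1 = b := hel 1 (by simp)
    have h2 : e 2 = c := hel 2 (by simp)
    have h3 : e 3 = x := hel 3 (by simp)
    have h4 : e 4 = y := hel 4 (by simp)
    have := refutes_eq_false h𝒻 hcard hZ𝒻 hZ he hVe (ins := [(0, 1, 2), (0, 1, 3), (0, 2, 3), (1, 2, 4)])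
      (outs := [((0, 1, 2), true, false, false)])
      (by simp only [List.forall_mem_cons, h0, h1, h2, h3, h4]
          exact ⟨h, hx, hxy.swap_right, hy, by simp⟩)
      (by simpa using fun _ _ _ => label_notMem_of_covAt h𝒻 he (by rwa [h0, h1, h2]))
    exact absurd (refutes_bent_covAt.symm.trans this) (by simp)

theorem refutes_eq_false_of_covAll (h𝒻 : Unshattered V 𝒻) (hcard : 17 ≤ 𝒻.card) (hZ𝒻 : Z ⊆ 𝒻)
    (hZ : PairClosed Z) (hall : ∀ a b c, Edge Z a b c → CovAll 𝒻 a b c)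
    (he : Set.InjOn e (Set.Iio 7)) (hV : V ⊆ (range 7).image e) {ins : List (ℕ × ℕ × ℕ)}
    (htr : ∀ t ∈ ins, t ∈ triples) (hins : ∀ t ∈ ins, Edge Z (e t.1) (e t.2.1) (e t.2.2)) :
    refutes ins (ins.map (·, false, false, false)) = false := by
  refine refutes_eq_false h𝒻 hcard hZ𝒻 hZ he hV hins fun p hp u hu hpu => ?_
  obtain ⟨t, ht, rfl⟩ := List.mem_map.1 hp
  exact label_notMem_of_covAll h𝒻 he (htr t ht) (hall _ _ _ (hins t ht)) hu hpu

theorem false_of_covAll_bent (h𝒻 : Unshattered V 𝒻) (hV : V.card = 7) (hcard : 17 ≤ 𝒻.card)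
    (hZ𝒻 : Z ⊆ 𝒻) (hZ : PairClosed Z) (hall : ∀ a b c, Edge Z a b c → CovAll 𝒻 a b c) {a b c x y : ℕ}
    (h : Edge Z a b c) (hx : Edge Z a b x) (hx' : Edge Z a c x) (hy : Edge Z b c y) (hya : y ≠ a)
    (hyx : y ≠ x) : False := by
  have hVabc := h𝒻.mem_of_edge (h.mono hZ𝒻)
  have hVx := (h𝒻.mem_of_edge (hx.mono hZ𝒻)).2.2
  have hVy := (h𝒻.mem_of_edge (hy.mono hZ𝒻)).2.2
  have hd := h.1
  have hdx := hx.1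
  have hdx' := hx'.1
  have hdy := hy.1
  obtain ⟨e, hel, he, hVe⟩ := exists_labelling hV (l := [a, b, c, x, y]) (by grind) (by grind)
  have h0 : e 0 = a := hel 0 (by simp)
  have h1 : e 1 = b := hel 1 (by simp)
  have h2 : e 2 = c := hel 2 (by simp)
  have h3 : e 3 = x := hel 3 (by simp)
  have h4 : e 4 = y := hel 4 (by simp)
  have := refutes_eq_false_of_covAll h𝒻 hcard hZ𝒻 hZ hall he hVe
    (ins := [(0, 1, 2), (0, 1, 3), (0, 2, 3), (1, 2, 4)]) (by decide)
    (by simp only [List.forall_mem_cons, h0, h1, h2, h3, h4]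
        exact ⟨h, hx, hx', hy, by simp⟩)
  exact absurd (refutes_bent_covAll.symm.trans this) (by simp)

theorem Unshattered.card_le_of_card_eq_seven (h𝒻 : Unshattered V 𝒻) (hV : V.card = 7) :
    𝒻.card ≤ 16 := by
  by_contra! hcard
  obtain ⟨Z, hZ𝒻, ⟨F, hF⟩, hZ⟩ := exists_pairClosed h𝒻.subset h𝒻.card_eq
    (by rw [hV]; exact lt_of_lt_of_le (by decide) hcard)
  have hZ3 : ∀ F ∈ Z, F.card = 3 := fun F hF => h𝒻.card_eq F (hZ𝒻 hF)
  have hno := fun a b c h => @false_of_covAt V 𝒻 Z h𝒻 hV hcard hZ𝒻 hZ a b c h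
  have hall : ∀ a b c, Edge Z a b c → CovAll 𝒻 a b c := by
    intro a b c h
    rcases h𝒻.edge_cases_of_pairClosed hZ𝒻 hZ h with h1 | h1 | h1 | h1
    · exact (hno a b c h h1).elim
    · exact (hno b a c h.swap_left h1).elim
    · exact (hno c a b h.swap_right.swap_left h1).elim
    · exact h1
  obtain ⟨a, b, c, rfl, h⟩ := exists_edge_of_mem hF (hZ3 F hF)
  obtain ⟨x, hxc, hx⟩ := hZ.exists_edge hZ3 h
  obtain ⟨y, hyb, hy⟩ := hZ.exists_edge hZ3 h.swap_right
  obtain ⟨z, hza, hz⟩ := hZ.exists_edge hZ3 h.swap_left.swap_right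
  have hbent := fun p q r s t => @false_of_covAll_bent V 𝒻 Z h𝒻 hV hcard hZ𝒻 hZ hall p q r s t
  have hVabc := h𝒻.mem_of_edge (h.mono hZ𝒻)
  have hVx := (h𝒻.mem_of_edge (hx.mono hZ𝒻)).2.2
  have hVy := (h𝒻.mem_of_edge (hy.mono hZ𝒻)).2.2
  have hVz := (h𝒻.mem_of_edge (hz.mono hZ𝒻)).2.2
  have hd := h.1
  have hdx := hx.1
  have hdy := hy.1
  have hdz := hz.1
  by_cases hxy : x = y
  · subst hxy
    by_cases hxz : z = x
    · subst hxz
      obtain ⟨e, hel, he, hVe⟩ := exists_labelling hV (l := [a, b, c, z]) (by grind) (by grind)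
      have h0 : e 0 = a := hel 0 (by simp)
      have h1 : e 1 = b := hel 1 (by simp)
      have h2 : e 2 = c := hel 2 (by simp)
      have h3 : e 3 = z := hel 3 (by simp)
      have := refutes_eq_false_of_covAll h𝒻 hcard hZ𝒻 hZ hall he hVe
        (ins := [(0, 1, 2), (0, 1, 3), (0, 2, 3), (1, 2, 3)]) (by decide)
        (by simp only [List.forall_mem_cons, h0, h1, h2, h3]
            exact ⟨h, hx, hy, hz, by simp⟩)
      exact absurd (refutes_tetrahedron_covAll.symm.trans this) (by simp)
    · exact hbent a b c x z h hx hy hz hza hxz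
  by_cases hxz : x = z
  · subst hxz
    exact hbent b a c x y h.swap_left hx.swap_left hz hy hyb (Ne.symm hxy)
  by_cases hyz : y = z
  · subst hyz
    exact hbent c a b y x h.swap_right.swap_left hy.swap_left hz.swap_left hx hxc hxy
  obtain ⟨e, hel, he, hVe⟩ := exists_labelling hV (l := [a, b, c, x, y, z]) (by grind) (by grind)
  have h0 : e 0 = a := hel 0 (by simp)
  have h1 : e 1 = b := hel 1 (by simp)
  have h2 : e 2 = c := hel 2 (by simp)
  have h3 : e 3 = x := hel 3 (by simp)
  have h4 : e 4 = y := hel 4 (by simp)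
  have h5 : e 5 = z := hel 5 (by simp)
  have := refutes_eq_false_of_covAll h𝒻 hcard hZ𝒻 hZ hall he hVe
    (ins := [(0, 1, 2), (0, 1, 3), (0, 2, 4), (1, 2, 5)]) (by decide)
    (by simp only [List.forall_mem_cons, h0, h1, h2, h3, h4, h5]
        exact ⟨h, hx, hy, hz, by simp⟩)
  exact absurd (refutes_spread_covAll.symm.trans this) (by simp)

end

theorem Unshattered.erase {V : Finset ℕ} {𝒻 : Finset (Finset ℕ)} (h𝒻 : Unshattered V 𝒻) (v : ℕ) :
    Unshattered (V.erase v) {F ∈ 𝒻 | v ∉ F} where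
  subset F hF := subset_erase.2 ⟨h𝒻.subset F (mem_filter.1 hF).1, (mem_filter.1 hF).2⟩
  card_eq F hF := h𝒻.card_eq F (mem_filter.1 hF).1
  not_shatters F hF h := h𝒻.not_shatters F (mem_filter.1 hF).1 fun T hT => by
    obtain ⟨G, hG, hGT⟩ := h T hT
    exact ⟨G, (mem_filter.1 hG).1, hGT⟩

/-- A counterexample to the bound on at least eight vertices, when the bound holds for one vertex
less. -/
structure MinimalCounterexample (V : Finset ℕ) (𝒻 : Finset (Finset ℕ)) : Prop
    extends Unshattered V 𝒻 where
  eight_le : 8 ≤ V.card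
  lt_card : (V.card - 1).choose 2 + 1 < 𝒻.card
  card_le : ∀ U 𝒢, U.card = V.card - 1 → Unshattered U 𝒢 → 𝒢.card ≤ (V.card - 2).choose 2 + 1

namespace MinimalCounterexample

variable {V : Finset ℕ} {𝒻 : Finset (Finset ℕ)}

theorem choose_eq (h : MinimalCounterexample V 𝒻) :
    (V.card - 1).choose 2 = (V.card - 2).choose 2 + (V.card - 2) := by
  obtain ⟨k, hk⟩ : ∃ k, V.card = k + 2 := ⟨V.card - 2, by have := h.eight_le; omega⟩
  rw [hk, show k + 2 - 1 = k + 1 by omega, show k + 2 - 2 = k by omega, Nat.choose_succ_succ]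
  simp [add_comm]

theorem le_degree (h : MinimalCounterexample V 𝒻) {v : ℕ} (hv : v ∈ V) :
    V.card - 1 ≤ #{F ∈ 𝒻 | v ∈ F} := by
  have h1 := h.card_le (V.erase v) _ (card_erase_of_mem hv) (h.erase v)
  have h2 := card_filter_add_card_filter_not (s := 𝒻) (v ∈ ·)
  have h3 := h.choose_eq
  have h4 := h.lt_card
  have h5 := h.eight_le
  omega

/-- The link of `z` cannot lie in a star at `p` missing the leaves `B` together with at most `|B|`
further pairs. -/
theorem false_of_star (h : MinimalCounterexample V 𝒻) {z : ℕ} (p : ℕ) (B : List ℕ)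
    (A : List (ℕ × ℕ)) (hz : z ∈ V) (hp : p ∈ V) (hzp : z ≠ p) (hBn : B.Nodup)
    (hB : ∀ x ∈ B, x ∈ V ∧ x ≠ z ∧ x ≠ p) (hlen : A.length ≤ B.length)
    (hE : ∀ u v, Edge 𝒻 z u v →
      (u = p ∧ v ∉ B) ∨ (v = p ∧ u ∉ B) ∨ (u, v) ∈ A ∨ (v, u) ∈ A) : False := by
  have hsub : {F ∈ 𝒻 | z ∈ F} ⊆ (((V.erase z).erase p) \ B.toFinset).image (fun v => {z, p, v}) ∪
      A.toFinset.image fun q => {z, q.1, q.2} := by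
    intro F hF
    obtain ⟨hF, hzF⟩ := mem_filter.1 hF
    obtain ⟨u, v, rfl, he⟩ : ∃ u v, F = {z, u, v} ∧ Edge 𝒻 z u v := by
      obtain ⟨a, b, c, rfl, he⟩ := exists_edge_of_mem hF (h.card_eq F hF)
      simp only [mem_insert, mem_singleton] at hzF
      rcases hzF with rfl | rfl | rfl
      · exact ⟨b, c, rfl, he⟩
      · exact ⟨a, c, insert_comm _ _ _, he.swap_left⟩
      · exact ⟨a, b, by grind, he.swap_right.swap_left⟩
    have hV := h.mem_of_edge he
    have hd := he.1
    rw [mem_union, mem_image, mem_image]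
    rcases hE u v he with ⟨rfl, hvB⟩ | ⟨rfl, huB⟩ | hA | hA
    · exact Or.inl ⟨v, by simp only [mem_sdiff, mem_erase, List.mem_toFinset]; grind, rfl⟩
    · exact Or.inl ⟨u, by simp only [mem_sdiff, mem_erase, List.mem_toFinset]; grind,
        by rw [pair_comm]⟩
    · exact Or.inr ⟨_, List.mem_toFinset.2 hA, rfl⟩
    · exact Or.inr ⟨_, List.mem_toFinset.2 hA, by rw [pair_comm]⟩
  have h1 := (card_le_card hsub).trans (card_union_le _ _)
  have h2 : _ ≤ #(((V.erase z).erase p) \ B.toFinset) :=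
    card_image_le (f := fun v => ({z, p, v} : Finset ℕ))
  have h3 : _ ≤ #A.toFinset := card_image_le (f := fun q : ℕ × ℕ => ({z, q.1, q.2} : Finset ℕ))
  have h4 := List.toFinset_card_le A
  rw [card_sdiff_of_subset fun x hx => by
    have := hB x (List.mem_toFinset.1 hx)
    simp [this], List.toFinset_card_of_nodup hBn,
    card_erase_of_mem (mem_erase.2 ⟨hzp.symm, hp⟩), card_erase_of_mem hz] at h2
  have h5 := h.le_degree hz
  have h6 := h.eight_le
  have h7 : B.length ≤ V.card - 2 := by
    rw [← List.toFinset_card_of_nodup hBn, show V.card - 2 = #((V.erase z).erase p) by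
      rw [card_erase_of_mem (mem_erase.2 ⟨hzp.symm, hp⟩), card_erase_of_mem hz]; omega]
    exact card_le_card fun x hx => by
      have := hB x (List.mem_toFinset.1 hx)
      simp [this]
  omega

theorem exists_notMem (h : MinimalCounterexample V 𝒻) (l : List ℕ) (hl : l.length ≤ 7) :
    ∃ v ∈ V, v ∉ l := by
  by_contra! hcon
  have h1 := card_le_card (fun v hv => List.mem_toFinset.2 (hcon v hv) : V ⊆ l.toFinset)
  have h2 := List.toFinset_card_le l
  have h3 := h.eight_le
  omega

theorem false_of_few (h : MinimalCounterexample V 𝒻) {z : ℕ} (A : List (ℕ × ℕ)) (hz : z ∈ V)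
    (hlen : A.length ≤ 6) (hE : ∀ u v, Edge 𝒻 z u v → (u, v) ∈ A ∨ (v, u) ∈ A) : False := by
  obtain ⟨p, hp, hpz⟩ := h.exists_notMem [z] (by simp)
  have hcard : 6 ≤ #((V.erase z).erase p) := by
    have := h.eight_le
    rw [card_erase_of_mem (mem_erase.2 ⟨by simpa using hpz, hp⟩), card_erase_of_mem hz]
    omega
  refine h.false_of_star p ((V.erase z).erase p).toList A hz hp (by grind) (nodup_toList _)
    (fun x hx => by rw [mem_toList] at hx; grind) (by simpa using hlen.trans hcard)
    fun u v he => Or.inr (Or.inr (hE u v he))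

theorem mem_of_own_pair {a b c : ℕ} (hab : a ≠ b) (h : ∀ d, Edge 𝒻 a b d → d = c) {F : Finset ℕ}
    (hF : F ∈ 𝒻) (h3 : F.card = 3) (ha : a ∈ F) (hb : b ∈ F) : c ∈ F := by
  obtain ⟨x, y, z, rfl, he⟩ := exists_edge_of_mem hF h3
  have h1 := he.swap_right
  have h2 := he.swap_left
  have h3 := h1.swap_left
  have h4 := h2.swap_right
  have h5 := h3.swap_right
  simp only [mem_insert, mem_singleton] at ha hb ⊢
  rcases ha with rfl | rfl | rfl <;> rcases hb with rfl | rfl | rfl <;> grind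

theorem covAt_of_traces (h : MinimalCounterexample V 𝒻) {a b c x : ℕ} (hc : Edge 𝒻 a b c)
    (hx : Edge 𝒻 a b x) (hx' : Edge 𝒻 a c x)
    (htr : ∀ T ⊆ ({b, c, x} : Finset ℕ), ¬ (b ∈ T ∧ c ∈ T) → ∃ F ∈ 𝒻, a ∉ F ∧ F ∩ {b, c, x} = T) :
    CovAt 𝒻 a b x := by
  have hd := hc.1
  have hdx := hx.1
  have hdx' := hx'.1
  have htr' : ∀ T ⊆ ({b, c, x} : Finset ℕ), ¬ (b ∈ T ∧ c ∈ T) → ∃ F ∈ 𝒻, F.card = 3 ∧ a ∉ F ∧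
      (b ∈ F ↔ b ∈ T) ∧ (x ∈ F ↔ x ∈ T) := by
    intro T hT hbc
    obtain ⟨F, hF, haF, rfl⟩ := htr T hT hbc
    exact ⟨F, hF, h.card_eq F hF, haF, by simp, by simp⟩
  rcases h.edge_cases hx with h1 | h1 | h1 | h1 | h1 | h1 | h1
  · exact absurd (h1 c hc) (by grind)
  · exact absurd (h1 c hx'.swap_right) (by grind)
  · obtain ⟨F, hF, h3, haF, hbF, hxF⟩ := htr' {b, x} (by grind) (by grind)
    exact absurd (mem_of_own_pair (by grind) h1 hF h3 (by simp [hbF]) (by simp [hxF])) haF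
  · exact h1
  · obtain ⟨F, hF, h3, haF, hbF, hxF⟩ := htr' {b} (by grind) (by grind)
    have := h1.mem_or_mem hF h3 (by simp [hbF])
    grind
  · obtain ⟨F, hF, h3, haF, hbF, hxF⟩ := htr' {x} (by grind) (by grind)
    have := h1.mem_or_mem hF h3 (by simp [hxF])
    grind
  · obtain ⟨F, hF, h3, haF, hbF, hxF⟩ := htr' ∅ (by grind) (by grind)
    have := h1.mem_or_mem hF h3
    grind

/-- Shifting from `a`: a covered triple `a b c` lies in a complete tetrahedron. -/
theorem exists_tetrahedron (h : MinimalCounterexample V 𝒻) {a b c : ℕ} (habc : Edge 𝒻 a b c)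
    (hcov : CovAt 𝒻 a b c) : ∃ x, Edge 𝒻 a b x ∧ Edge 𝒻 a c x ∧ Edge 𝒻 b c x := by
  classical
  by_contra! hcon
  have hd := habc.1
  have hVabc := h.mem_of_edge habc
  set X : Finset ℕ := {x ∈ V \ {a, b, c} | Edge 𝒻 a b x} with hX
  set Y : Finset ℕ := {x ∈ V \ {a, b, c} | Edge 𝒻 a c x} with hY
  have hW : ∀ x ∈ X ∩ Y, Edge 𝒻 a b x ∧ Edge 𝒻 a c x := fun x hx =>
    ⟨(mem_filter.1 (mem_inter.1 hx).1).2, (mem_filter.1 (mem_inter.1 hx).2).2⟩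
  set 𝒢 := {F ∈ 𝒻 | a ∉ F} ∪ (X ∩ Y).image fun x => {b, c, x} with h𝒢
  have hnew : ∀ x ∈ X ∩ Y, ({b, c, x} : Finset ℕ) ∉ 𝒻 := fun x hx hF =>
    hcon x (hW x hx).1 (hW x hx).2 ⟨by grind [(hW x hx).1.1, (hW x hx).2.1], hF⟩
  have hdeg : #{F ∈ 𝒻 | a ∈ F} ≤ 1 + (#X + #Y) := by
    have hsub : {F ∈ 𝒻 | a ∈ F} ⊆ {{a, b, c}} ∪ (X.image (fun x => {a, b, x}) ∪
        Y.image fun x => {a, c, x}) := by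
      intro F hF
      obtain ⟨hF, haF⟩ := mem_filter.1 hF
      obtain ⟨u, v, rfl, he⟩ : ∃ u v, F = {a, u, v} ∧ Edge 𝒻 a u v := by
        obtain ⟨p, q, r, rfl, he⟩ := exists_edge_of_mem hF (h.card_eq F hF)
        simp only [mem_insert, mem_singleton] at haF
        rcases haF with rfl | rfl | rfl
        · exact ⟨q, r, rfl, he⟩
        · exact ⟨p, r, insert_comm _ _ _, he.swap_left⟩
        · exact ⟨p, q, by grind, he.swap_right.swap_left⟩
      have hV := h.mem_of_edge he
      have hduv := he.1
      have he' := he.swap_right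
      simp only [mem_union, mem_singleton, mem_image, hX, hY, mem_filter, mem_sdiff, mem_insert]
      rcases hcov u v he with rfl | rfl | rfl | rfl
      · by_cases hvc : v = c
        · exact Or.inl (by rw [hvc])
        · exact Or.inr (Or.inl ⟨v, by grind, rfl⟩)
      · by_cases hvb : v = b
        · exact Or.inl (by rw [hvb, pair_comm])
        · exact Or.inr (Or.inr ⟨v, by grind, rfl⟩)
      · by_cases huc : u = c
        · exact Or.inl (by rw [huc, pair_comm])
        · exact Or.inr (Or.inl ⟨u, by grind, by rw [pair_comm]⟩)
      · by_cases hub : u = b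
        · exact Or.inl (by rw [hub])
        · exact Or.inr (Or.inr ⟨u, by grind, by rw [pair_comm]⟩)
    refine (card_le_card hsub).trans ((card_union_le _ _).trans ?_)
    rw [card_singleton]
    exact Nat.add_le_add_left ((card_union_le _ _).trans
      (Nat.add_le_add card_image_le card_image_le)) 1
  have hXY : #X + #Y ≤ V.card - 3 + #(X ∩ Y) := by
    rw [← card_union_add_card_inter]
    refine Nat.add_le_add_right ?_ _
    have h3 : #({a, b, c} : Finset ℕ) = 3 := card_eq_three.2 ⟨a, b, c, hd.1, hd.2.1, hd.2.2, rfl⟩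
    rw [← h3, ← card_sdiff_of_subset (by simp [insert_subset_iff, hVabc])]
    exact card_le_card (union_subset (filter_subset _ _) (filter_subset _ _))
  have hcard : #𝒢 = #{F ∈ 𝒻 | a ∉ F} + #(X ∩ Y) := by
    rw [h𝒢, card_union_of_disjoint, card_image_of_injOn]
    · intro x hx y hy hxy
      have h1 := (hW x hx).1.1
      have h2 := (hW x hx).2.1
      have : x ∈ ({b, c, y} : Finset ℕ) := by
        rw [← show ({b, c, x} : Finset ℕ) = {b, c, y} from hxy]
        simp
      grind
    · rw [disjoint_left]
      intro F hF hF'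
      obtain ⟨x, hx, rfl⟩ := mem_image.1 hF'
      exact hnew x hx (mem_filter.1 hF).1
  have hsplit : ∀ G ∈ 𝒢, (G ∈ 𝒻 ∧ a ∉ G) ∨ ∃ x ∈ X ∩ Y, G = {b, c, x} := fun G hG => by
    rcases mem_union.1 hG with hG | hG
    · exact Or.inl (mem_filter.1 hG)
    · obtain ⟨x, hx, rfl⟩ := mem_image.1 hG
      exact Or.inr ⟨x, hx, rfl⟩
  obtain ⟨S, hS, hsh⟩ : ∃ S ∈ 𝒢, Shatters 𝒢 S := by
    by_contra! hns
    have := h.card_le (V.erase a) 𝒢 (card_erase_of_mem hVabc.1) ⟨fun G hG => ?_, fun G hG => ?_, hns⟩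
    · have h1 := card_filter_add_card_filter_not (s := 𝒻) (a ∈ ·)
      have h2 := h.choose_eq
      have h3 := h.lt_card
      have h4 := h.eight_le
      omega
    · rcases hsplit G hG with ⟨hG, haG⟩ | ⟨x, hx, rfl⟩
      · exact subset_erase.2 ⟨h.subset G hG, haG⟩
      · have := (h.mem_of_edge (hW x hx).1).2.2
        have := (hW x hx).1.1
        simp only [insert_subset_iff, mem_erase, singleton_subset_iff]
        grind
    · rcases hsplit G hG with ⟨hG, -⟩ | ⟨x, hx, rfl⟩
      · exact h.card_eq G hG
      · have h1 := (hW x hx).1.1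
        have h2 := (hW x hx).2.1
        exact card_eq_three.2 ⟨b, c, x, by grind, by grind, by grind, rfl⟩
  rcases hsplit S hS with ⟨hS𝒻, haS⟩ | ⟨x, hx, rfl⟩
  · refine h.not_shatters S hS𝒻 fun T hT => ?_
    obtain ⟨G, hG, rfl⟩ := hsh T hT
    rcases hsplit G hG with ⟨hG, -⟩ | ⟨x, hx, rfl⟩
    · exact ⟨G, hG, rfl⟩
    · have h1 := hW x hx
      have hne : ¬ {b, c, x} ⊆ S := fun hsub => hnew x hx (by
        rw [eq_of_subset_of_card_le hsub (by
          rw [h.card_eq S hS𝒻, card_eq_three.2 ⟨b, c, x, by grind [h1.1.1, h1.2.1],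
            by grind [h1.1.1, h1.2.1], by grind [h1.1.1, h1.2.1], rfl⟩])]
        exact hS𝒻)
      simp only [insert_subset_iff, singleton_subset_iff] at hne
      by_cases hbS : b ∈ S
      · by_cases hcS : c ∈ S
        · exact ⟨_, habc.2, by ext y; simp only [mem_inter, mem_insert, mem_singleton]; grind⟩
        · exact ⟨_, h1.1.2, by ext y; simp only [mem_inter, mem_insert, mem_singleton]; grind⟩
      · exact ⟨_, h1.2.2, by ext y; simp only [mem_inter, mem_insert, mem_singleton]; grind⟩
  · have h1 := hW x hx
    have htr : ∀ T ⊆ ({b, c, x} : Finset ℕ), ¬ (b ∈ T ∧ c ∈ T) → ∃ F ∈ 𝒻, a ∉ F ∧ F ∩ {b, c, x} = T := by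
      intro T hT hbc
      obtain ⟨G, hG, rfl⟩ := hsh T hT
      rcases hsplit G hG with ⟨hG, haG⟩ | ⟨y, hy, rfl⟩
      · exact ⟨G, hG, haG, rfl⟩
      · exact absurd ⟨by simp, by simp⟩ hbc
    have hb := h.covAt_of_traces habc h1.1 h1.2 htr
    have hc := h.covAt_of_traces habc.swap_right h1.2 h1.1 (by
      rw [insert_comm]
      exact fun T hT hbc => htr T hT (by tauto))
    refine h.false_of_few [(b, c), (b, x), (c, x)] hVabc.1 (by simp) fun u v he => ?_
    have := he.1
    have := hcov u v he
    have := hb u v he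
    have := hc u v he
    simp only [List.mem_cons, Prod.mk.injEq]
    grind

end MinimalCounterexample

/-- A minimal counterexample with a complete tetrahedron `a b c x`, every edge at `a` meeting
`{b, c}`, and a pair-closed subfamily reaching outside `a b c x`. -/
structure Tetrahedron (V : Finset ℕ) (𝒻 Z : Finset (Finset ℕ)) (a b c x : ℕ) : Prop
    extends MinimalCounterexample V 𝒻 where
  subset_family : Z ⊆ 𝒻
  closed : PairClosed Z
  exists_outside : ∃ z u v, Edge Z z u v ∧ z ≠ a ∧ z ≠ b ∧ z ≠ c ∧ z ≠ x
  abc : Edge 𝒻 a b c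
  abx : Edge 𝒻 a b x
  acx : Edge 𝒻 a c x
  bcx : Edge 𝒻 b c x
  cov : CovAt 𝒻 a b c

namespace Tetrahedron

variable {V : Finset ℕ} {𝒻 Z : Finset (Finset ℕ)} {a b c x : ℕ}

theorem swap (h : Tetrahedron V 𝒻 Z a b c x) : Tetrahedron V 𝒻 Z a c b x where
  __ := h
  exists_outside := by
    obtain ⟨z, u, v, he, ha, hb, hc, hx⟩ := h.exists_outside
    exact ⟨z, u, v, he, ha, hc, hb, hx⟩
  abc := h.abc.swap_right
  abx := h.acx
  acx := h.abx
  bcx := h.bcx.swap_left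
  cov u v he := by have := h.cov u v he; tauto

theorem swap_of_covAt (h : Tetrahedron V 𝒻 Z a b c x) (hcov : CovAt 𝒻 a b x) :
    Tetrahedron V 𝒻 Z a b x c where
  __ := h
  exists_outside := by
    obtain ⟨z, u, v, he, ha, hb, hc, hx⟩ := h.exists_outside
    exact ⟨z, u, v, he, ha, hb, hx, hc⟩
  abc := h.abx
  abx := h.abc
  acx := h.acx.swap_right
  bcx := h.bcx.swap_right
  cov := hcov

theorem closure (h : Tetrahedron V 𝒻 Z a b c x) {u v w : ℕ} (he : Edge Z u v w) :
    ∃ d, d ≠ w ∧ Edge Z u v d :=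
  h.closed.exists_edge (fun F hF => h.card_eq F (h.subset_family hF)) he

theorem covers (h : Tetrahedron V 𝒻 Z a b c x) {u v w : ℕ} (he : Edge Z u v w) :
    CovAt 𝒻 u v w ∨ CovAt 𝒻 v u w ∨ CovAt 𝒻 w u v ∨ CovAll 𝒻 u v w :=
  h.edge_cases_of_pairClosed h.subset_family h.closed he

theorem edge (h : Tetrahedron V 𝒻 Z a b c x) {u v w : ℕ} (he : Edge Z u v w) : Edge 𝒻 u v w :=
  he.mono h.subset_family

theorem of_not_edge (hm : MinimalCounterexample V 𝒻) (hZ𝒻 : Z ⊆ 𝒻) (hZ : PairClosed Z)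
    (hZn : Z.Nonempty) (hne : ¬ Edge Z a b c) (abc : Edge 𝒻 a b c) (abx : Edge 𝒻 a b x)
    (acx : Edge 𝒻 a c x) (bcx : Edge 𝒻 b c x) (cov : CovAt 𝒻 a b c) :
    Tetrahedron V 𝒻 Z a b c x where
  __ := hm
  subset_family := hZ𝒻
  closed := hZ
  abc := abc
  abx := abx
  acx := acx
  bcx := bcx
  cov := cov
  exists_outside := by
    by_contra! hcon
    obtain ⟨F, hF⟩ := hZn
    have hZ3 : ∀ F ∈ Z, F.card = 3 := fun F hF => hm.card_eq F (hZ𝒻 hF)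
    obtain ⟨u, v, w, -, he⟩ := exists_edge_of_mem hF (hZ3 F hF)
    have s1 : ∀ p q r, Edge Z p q r → Edge Z q p r := fun _ _ _ => Edge.swap_left
    have s2 : ∀ p q r, Edge Z p q r → Edge Z p r q := fun _ _ _ => Edge.swap_right
    have hd : ∀ p q r, Edge Z p q r → p ≠ q ∧ p ≠ r ∧ q ≠ r := fun _ _ _ he => he.1
    have h1 : ¬ Edge Z a b x := fun he => by
      obtain ⟨d, hd, he'⟩ := hZ.exists_edge hZ3 he
      grind
    have h2 : ¬ Edge Z a c x := fun he => by
      obtain ⟨d, hd, he'⟩ := hZ.exists_edge hZ3 he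
      grind
    have h3 : ¬ Edge Z b c x := fun he => by
      obtain ⟨d, hd, he'⟩ := hZ.exists_edge hZ3 he
      grind
    grind

/-- The data of a tetrahedron, with the symmetries of edges, in the form used by automation. -/
theorem basic (h : Tetrahedron V 𝒻 Z a b c x) :
    (a ∈ V ∧ b ∈ V ∧ c ∈ V ∧ x ∈ V) ∧ (a ≠ b ∧ a ≠ c ∧ a ≠ x ∧ b ≠ c ∧ b ≠ x ∧ c ≠ x) ∧
    (∀ p q r, Edge 𝒻 p q r → Edge 𝒻 q p r ∧ Edge 𝒻 p r q ∧ p ≠ q ∧ p ≠ r ∧ q ≠ r) ∧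
    (∀ p q r, Edge Z p q r → Edge Z q p r ∧ Edge Z p r q ∧ Edge 𝒻 p q r) ∧
    (∀ d e, Edge 𝒻 a d e → d = b ∨ d = c ∨ e = b ∨ e = c) ∧
    Edge 𝒻 a b c ∧ Edge 𝒻 a b x ∧ Edge 𝒻 a c x ∧ Edge 𝒻 b c x :=
  ⟨⟨(h.mem_of_edge h.abx).1, (h.mem_of_edge h.abx).2.1, (h.mem_of_edge h.acx).2.1,
    (h.mem_of_edge h.abx).2.2⟩,
    ⟨h.abc.1.1, h.abc.1.2.1, h.abx.1.2.1, h.abc.1.2.2, h.abx.1.2.2, h.acx.1.2.2⟩,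
    fun _ _ _ he => ⟨he.swap_left, he.swap_right, he.1⟩,
    fun _ _ _ he => ⟨he.swap_left, he.swap_right, h.edge he⟩, h.cov, h.abc, h.abx, h.acx, h.bcx⟩

/-- The case in which the edges at `a` other than `a c x` all contain `b`, and those at `c` other
than `a b c` all contain `x`. -/
theorem false_of_covAt_a_of_covAt_c (h : Tetrahedron V 𝒻 Z a b c x) (ha : CovAt 𝒻 a b x)
    (hc : CovAt 𝒻 c a x) : False := by
  obtain ⟨⟨ma, mb, mc, mx⟩, ⟨ab, ac, ax, bc, bx, cx⟩, E, E', hcov, e1, e2, e3, e4⟩ := h.basic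
  simp only [CovAt] at ha hc
  have hab : ∀ z ∈ V, z ≠ a → z ≠ b → Edge 𝒻 a b z := by
    intro z hz hza hzb
    by_contra hn
    refine h.false_of_star (z := a) b [z] [(c, x)] ma mb ab (by simp) (by grind) (by simp)
      fun u v he => ?_
    simp only [List.mem_singleton, Prod.mk.injEq]
    grind
  have hcx : ∀ z ∈ V, z ≠ c → z ≠ x → Edge 𝒻 c x z := by
    intro z hz hzc hzx
    by_contra hn
    refine h.false_of_star (z := c) x [z] [(a, b)] mc mx cx (by simp) (by grind) (by simp)
      fun u v he => ?_
    simp only [List.mem_singleton, Prod.mk.injEq]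
    grind
  have na : ∀ z d, z ≠ a → z ≠ b → z ≠ c → z ≠ x → ¬ Edge Z a z d := by
    intro z d hza hzb hzc hzx he
    obtain ⟨d', hd, he'⟩ := h.closure he
    grind
  have nc : ∀ z d, z ≠ a → z ≠ b → z ≠ c → z ≠ x → ¬ Edge Z c z d := by
    intro z d hza hzb hzc hzx he
    obtain ⟨d', hd, he'⟩ := h.closure he
    grind
  obtain ⟨p, z, w, he, hz, hw⟩ : ∃ p z w, Edge Z p z w ∧ (z ≠ a ∧ z ≠ b ∧ z ≠ c ∧ z ≠ x) ∧
      (w ≠ a ∧ w ≠ b ∧ w ≠ c ∧ w ≠ x) := by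
    obtain ⟨z, u, v, he, hz⟩ := h.exists_outside
    obtain ⟨d, hd, he'⟩ := h.closure he
    grind
  have mE := h.mem_of_edge (h.edge he)
  have hp : p ≠ a ∧ p ≠ c := by grind
  have h1 := hab z mE.2.1 (by grind) (by grind)
  have h2 := hcx z mE.2.1 (by grind) (by grind)
  have h3 := hab w mE.2.2 (by grind) (by grind)
  have h4 := hcx w mE.2.2 (by grind) (by grind)
  have h5 : Edge Z p z w := he
  rcases h.covers he with hz' | hz' | hz' | hz'
  · by_cases hpb : p = b
    · have := hz' a c; grind
    · by_cases hpx : p = x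
      · have := hz' a c; grind
      · have := hz' a b (by have := hab p; grind); grind
  · have h1 := hz' a b
    have h2 := hz' c x
    grind
  · have h1 := hz' a b
    have h2 := hz' c x
    grind
  · have h1 := hz' a b c
    have h2 := hz' a c x
    grind

/-- The case in which the edges at `a` other than `a c x` all contain `b`, and every edge meets
`a c x`. -/
theorem false_of_covAt_a_of_covAll (h : Tetrahedron V 𝒻 Z a b c x) (ha : CovAt 𝒻 a b x)
    (hacx : CovAll 𝒻 a c x) : False := by
  obtain ⟨⟨ma, mb, mc, mx⟩, ⟨ab, ac, ax, bc, bx, cx⟩, E, E', hcov, e1, e2, e3, e4⟩ := h.basic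
  simp only [CovAt, CovAll] at ha hacx
  have hab : ∀ z ∈ V, z ≠ a → z ≠ b → Edge 𝒻 a b z := by
    intro z hz hza hzb
    by_contra hn
    refine h.false_of_star (z := a) b [z] [(c, x)] ma mb ab (by simp) (by grind) (by simp)
      fun u v he => ?_
    simp only [List.mem_singleton, Prod.mk.injEq]
    grind
  have na : ∀ z d, z ≠ a → z ≠ b → z ≠ c → z ≠ x → ¬ Edge Z a z d := by
    intro z d hza hzb hzc hzx he
    obtain ⟨d', hd, he'⟩ := h.closure he
    grind
  have hO : ∀ u z w, Edge Z u z w → (z ≠ a ∧ z ≠ b ∧ z ≠ c ∧ z ≠ x) →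
      (w ≠ a ∧ w ≠ b ∧ w ≠ c ∧ w ≠ x) → False := by
    intro u z w he hz hw
    have mE := h.mem_of_edge (h.edge he)
    have h1 := hab z mE.2.1 (by grind) (by grind)
    have h3 := hab w mE.2.2 (by grind) (by grind)
    have hu : u = c ∨ u = x := by grind
    rcases h.covers he with hz' | hz' | hz' | hz'
    · have := hz' a b; grind
    · have := hz' a b; grind
    · have := hz' a b; grind
    · have h1 := hz' a b c
      have h2 := hz' a b x
      grind
  obtain ⟨z, he, hz⟩ : ∃ z, Edge Z z c x ∧ (z ≠ a ∧ z ≠ b ∧ z ≠ c ∧ z ≠ x) := by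
    obtain ⟨z, u, v, he, hz⟩ := h.exists_outside
    obtain ⟨d, hd, he'⟩ := h.closure he
    obtain ⟨d', hd', he''⟩ := h.closure he.swap_right
    grind
  have h1 := hab z (h.mem_of_edge (h.edge he)).1 (by grind) (by grind)
  obtain ⟨w, hw, hw'⟩ := h.exists_notMem [a, b, c, x, z] (by simp)
  simp only [List.mem_cons, List.not_mem_nil, not_or] at hw'
  have h2 := hab w hw (by grind) (by grind)
  rcases h.covers he with hz' | hz' | hz' | hz'
  · have := hz' a b; grind
  · have := hz' a b; grind
  · have := hz' a b; grind
  · have := hz' a b w; grind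

theorem false_of_covAt_a (h : Tetrahedron V 𝒻 Z a b c x) (ha : CovAt 𝒻 a b x) : False := by
  have h' := h.swap_of_covAt ha
  obtain ⟨⟨ma, mb, mc, mx⟩, ⟨ab, ac, ax, bc, bx, cx⟩, E, E', hcov, e1, e2, e3, e4⟩ := h.basic
  obtain ⟨z, hz, hz'⟩ : ∃ z, Edge 𝒻 a b z ∧ z ≠ c ∧ z ≠ x := by
    by_contra! hcon
    refine h.false_of_few (z := a) [(b, c), (b, x), (c, x)] ma (by simp) fun u v he => ?_
    have := ha u v he
    simp only [List.mem_cons, Prod.mk.injEq]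
    grind
  rcases h.edge_cases e3 with h1 | h1 | h1 | h1 | h1 | h1 | h1
  · have := h1 b; grind
  · have := h1 b; grind
  · have := h1 b; grind
  · have := h1 b z; grind
  · exact h.false_of_covAt_a_of_covAt_c ha h1
  · exact h'.false_of_covAt_a_of_covAt_c h.cov h1
  · exact h.false_of_covAt_a_of_covAll ha h1

/-- Each of the four triples of a tetrahedron satisfies one of the covering conditions. -/
theorem cases_faces (h : Tetrahedron V 𝒻 Z a b c x) :
    (∃ z, Edge 𝒻 a b z ∧ z ≠ c ∧ z ≠ x) ∧ (∃ z, Edge 𝒻 a c z ∧ z ≠ b ∧ z ≠ x) ∧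
    (CovAt 𝒻 b a x ∨ CovAt 𝒻 x a b ∨ CovAll 𝒻 a b x) ∧
    (CovAt 𝒻 c a x ∨ CovAt 𝒻 x a c ∨ CovAll 𝒻 a c x) ∧
    (CovAt 𝒻 x b c ∨ CovAll 𝒻 b c x) := by
  obtain ⟨⟨ma, mb, mc, mx⟩, ⟨ab, ac, ax, bc, bx, cx⟩, E, E', hcov, e1, e2, e3, e4⟩ := h.basic
  have h2 : ∃ z, Edge 𝒻 a c z ∧ z ≠ b ∧ z ≠ x := by
    by_contra! hcon
    exact h.false_of_covAt_a (by simp only [CovAt]; grind)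
  have h3 : ∃ z, Edge 𝒻 a b z ∧ z ≠ c ∧ z ≠ x := by
    by_contra! hcon
    exact h.swap.false_of_covAt_a (by simp only [CovAt]; grind)
  refine ⟨h3, h2, ?_, ?_, ?_⟩
  · rcases h.edge_cases e2 with h1 | h1 | h1 | h1 | h1 | h1 | h1
    · have := h1 c; grind
    · have := h1 c; grind
    · have := h1 c; grind
    · exact (h.false_of_covAt_a h1).elim
    all_goals tauto
  · rcases h.edge_cases e3 with h1 | h1 | h1 | h1 | h1 | h1 | h1
    · have := h1 b; grind
    · have := h1 b; grind
    · have := h1 b; grind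
    · exact (h.swap.false_of_covAt_a h1).elim
    all_goals tauto
  · obtain ⟨z, hz, hz'⟩ := h2
    obtain ⟨w, hw, hw'⟩ := h3
    rcases h.edge_cases e4 with h1 | h1 | h1 | h1 | h1 | h1 | h1
    · have := h1 a; grind
    · have := h1 a; grind
    · have := h1 a; grind
    · have := h1 a w; grind
    · have := h1 a z; grind
    all_goals tauto

theorem false_of_covAt_x_of_covAt_x (h : Tetrahedron V 𝒻 Z a b c x) (habx : CovAt 𝒻 x a b)
    (hacx : CovAt 𝒻 x a c) : False := by
  obtain ⟨⟨ma, mb, mc, mx⟩, ⟨ab, ac, ax, bc, bx, cx⟩, E, E', hcov, e1, e2, e3, e4⟩ := h.basic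
  simp only [CovAt] at habx hacx
  refine h.false_of_few (z := x) [(a, b), (a, c), (b, c)] mx (by simp) fun u v he => ?_
  simp only [List.mem_cons, Prod.mk.injEq]
  grind

theorem false_of_covAt_x_of_covAll (h : Tetrahedron V 𝒻 Z a b c x) (habx : CovAt 𝒻 x a b)
    (hacx : CovAll 𝒻 a c x) : False := by
  obtain ⟨⟨ma, mb, mc, mx⟩, ⟨ab, ac, ax, bc, bx, cx⟩, E, E', hcov, e1, e2, e3, e4⟩ := h.basic
  simp only [CovAt, CovAll] at habx hacx
  have hlink : ∀ z u v, Edge 𝒻 z u v → z ≠ a → z ≠ b → z ≠ c → z ≠ x →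
      (u = c ∧ v ≠ x) ∨ (v = c ∧ u ≠ x) ∨ (u = a ∧ v = b) ∨ (u = b ∧ v = a) ∨
        (u = b ∧ v = x) ∨ (u = x ∧ v = b) := by grind
  have hc : ∀ z ∈ V, ∀ w ∈ V, z ≠ a → z ≠ b → z ≠ c → z ≠ x → w ≠ c → w ≠ x → w ≠ z →
      Edge 𝒻 z c w := by
    intro z hz w hw hza hzb hzc hzx hwc hwx hwz
    by_contra hn
    refine h.false_of_star (z := z) c [x, w] [(a, b), (b, x)] hz mc hzc (by grind) (by grind)
      (by simp) fun u v he => ?_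
    simp only [List.mem_cons, List.not_mem_nil, Prod.mk.injEq]
    grind
  have hbx : ∀ z ∈ V, z ≠ a → z ≠ b → z ≠ c → z ≠ x → Edge 𝒻 z b x ∧ Edge 𝒻 z a b := by
    intro z hz hza hzb hzc hzx
    constructor
    · by_contra hn
      refine h.false_of_star (z := z) c [x] [(a, b)] hz mc hzc (by grind) (by grind)
        (by simp) fun u v he => ?_
      simp only [List.mem_cons, List.not_mem_nil, Prod.mk.injEq]
      grind
    · by_contra hn
      refine h.false_of_star (z := z) c [x] [(b, x)] hz mc hzc (by grind) (by grind)
        (by simp) fun u v he => ?_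
      simp only [List.mem_cons, List.not_mem_nil, Prod.mk.injEq]
      grind
  obtain ⟨z, hz, hz'⟩ := h.exists_notMem [a, b, c, x] (by simp)
  obtain ⟨w, hw, hw'⟩ := h.exists_notMem [a, b, c, x, z] (by simp)
  obtain ⟨y, hy, hy'⟩ := h.exists_notMem [a, b, c, x, z, w] (by simp)
  simp only [List.mem_cons, List.not_mem_nil, not_or] at hz' hw' hy'
  have h1 := hbx z hz (by grind) (by grind) (by grind) (by grind)
  have h2 := hc z hz a ma (by grind) (by grind) (by grind) (by grind) ac ax (by grind)
  have h3 := hc z hz w hw (by grind) (by grind) (by grind) (by grind) (by grind) (by grind)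
    (by grind)
  have h4 := hc w hw y hy (by grind) (by grind) (by grind) (by grind) (by grind) (by grind)
    (by grind)
  rcases h.edge_cases (a := a) (b := b) (c := z) (by grind) with h' | h' | h' | h' | h' | h' | h'
  · have := h' c; grind
  · have := h' c; grind
  · have := h' x; grind
  · have := h' c x; grind
  · have := h' c x; grind
  · have := h' c w; grind
  · have := h' c w y; grind

theorem false_of_covAt_b_of_covAt_x (h : Tetrahedron V 𝒻 Z a b c x) (habx : CovAt 𝒻 b a x)
    (hacx : CovAt 𝒻 x a c) (hbcx : CovAt 𝒻 x b c ∨ CovAll 𝒻 b c x) : False := by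
  obtain ⟨⟨ma, mb, mc, mx⟩, ⟨ab, ac, ax, bc, bx, cx⟩, E, E', hcov, e1, e2, e3, e4⟩ := h.basic
  simp only [CovAt, CovAll] at habx hacx hbcx
  rcases hbcx with hbcx | hbcx
  swap
  · obtain ⟨z, hz, hz'⟩ := h.exists_notMem [a, b, c, x] (by simp)
    simp only [List.mem_cons, List.not_mem_nil, not_or] at hz'
    refine h.false_of_star (z := z) c [b] [(a, b)] hz mc (by grind) (by grind) (by grind)
      (by simp) fun u v he => ?_
    simp only [List.mem_cons, List.not_mem_nil, Prod.mk.injEq]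
    grind
  have hab : ∀ z ∈ V, z ≠ a → z ≠ b → Edge 𝒻 a b z := by
    intro z hz hza hzb
    by_contra hn
    refine h.false_of_star (z := b) a [z] [(c, x)] mb ma (by grind) (by simp) (by grind) (by simp)
      fun u v he => ?_
    simp only [List.mem_singleton, Prod.mk.injEq]
    grind
  have hO : ∀ u z w, Edge Z u z w → (z ≠ a ∧ z ≠ b ∧ z ≠ c ∧ z ≠ x) →
      (w ≠ a ∧ w ≠ b ∧ w ≠ c ∧ w ≠ x) → False := by
    intro u z w he hz hw
    have mE := h.mem_of_edge (h.edge he)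
    have h1 := hab z mE.2.1 (by grind) (by grind)
    have h3 := hab w mE.2.2 (by grind) (by grind)
    have hu : u ≠ a ∧ u ≠ b ∧ u ≠ x := by grind
    have h4 := hab u mE.1 (by grind) (by grind)
    rcases h.covers he with hz' | hz' | hz' | hz'
    · have := hz' a b; grind
    · have := hz' a b; grind
    · have := hz' a b; grind
    · have h2 := hz' a b x
      grind
  obtain ⟨z, u, v, he, hz⟩ := h.exists_outside
  have hb : ∀ d, ¬ Edge Z z b d := fun d he => by
    obtain ⟨d', hd', he'⟩ := h.closure he
    grind
  have hx : ∀ d, ¬ Edge Z z x d := fun d he => by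
    obtain ⟨d', hd', he'⟩ := h.closure he
    grind
  have ha : ∀ d, ¬ Edge Z z a d := fun d he => by
    obtain ⟨d', hd', he'⟩ := h.closure he
    grind
  grind

theorem false_of_covAt_b_of_covAll_of_covAt_x (h : Tetrahedron V 𝒻 Z a b c x)
    (habx : CovAt 𝒻 b a x) (hacx : CovAll 𝒻 a c x) (hbcx : CovAt 𝒻 x b c) : False := by
  obtain ⟨⟨ma, mb, mc, mx⟩, ⟨ab, ac, ax, bc, bx, cx⟩, E, E', hcov, e1, e2, e3, e4⟩ := h.basic
  simp only [CovAt, CovAll] at habx hacx hbcx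
  have hlink : ∀ z u v, Edge 𝒻 z u v → z ≠ a → z ≠ b → z ≠ c → z ≠ x →
      (u = c ∧ v ≠ b) ∨ (v = c ∧ u ≠ b) ∨ (u = a ∧ v = b) ∨ (u = b ∧ v = a) ∨
        (u = b ∧ v = x) ∨ (u = x ∧ v = b) := by grind
  have hc : ∀ z ∈ V, ∀ w ∈ V, z ≠ a → z ≠ b → z ≠ c → z ≠ x → w ≠ c → w ≠ b → w ≠ z →
      Edge 𝒻 z c w := by
    intro z hz w hw hza hzb hzc hzx hwc hwx hwz
    by_contra hn
    refine h.false_of_star (z := z) c [b, w] [(a, b), (b, x)] hz mc hzc (by grind) (by grind)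
      (by simp) fun u v he => ?_
    simp only [List.mem_cons, List.not_mem_nil, Prod.mk.injEq]
    grind
  have hbx : ∀ z ∈ V, z ≠ a → z ≠ b → z ≠ c → z ≠ x → Edge 𝒻 z b x ∧ Edge 𝒻 z a b := by
    intro z hz hza hzb hzc hzx
    constructor
    · by_contra hn
      refine h.false_of_star (z := z) c [b] [(a, b)] hz mc hzc (by grind) (by grind)
        (by simp) fun u v he => ?_
      simp only [List.mem_cons, List.not_mem_nil, Prod.mk.injEq]
      grind
    · by_contra hn
      refine h.false_of_star (z := z) c [b] [(b, x)] hz mc hzc (by grind) (by grind)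
        (by simp) fun u v he => ?_
      simp only [List.mem_cons, List.not_mem_nil, Prod.mk.injEq]
      grind
  obtain ⟨z, hz, hz'⟩ := h.exists_notMem [a, b, c, x] (by simp)
  obtain ⟨w, hw, hw'⟩ := h.exists_notMem [a, b, c, x, z] (by simp)
  simp only [List.mem_cons, List.not_mem_nil, not_or] at hz' hw'
  have h1 := hbx z hz (by grind) (by grind) (by grind) (by grind)
  have h2 := hc z hz a ma (by grind) (by grind) (by grind) (by grind) ac ab (by grind)
  have h3 := hc z hz x mx (by grind) (by grind) (by grind) (by grind) (by grind) (by grind)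
    (by grind)
  have h4 := hc w hw x mx (by grind) (by grind) (by grind) (by grind) (by grind) (by grind)
    (by grind)
  rcases h.edge_cases (a := a) (b := b) (c := z) (by grind) with h' | h' | h' | h' | h' | h' | h'
  · have := h' c; grind
  · have := h' c; grind
  · have := h' x; grind
  · have := h' c x; grind
  · have := h' c x; grind
  · have := h' c x; grind
  · have := h' c x w; grind

theorem false_of_covAt_b_of_covAll_of_covAll (h : Tetrahedron V 𝒻 Z a b c x)
    (habx : CovAt 𝒻 b a x) (hacx : CovAll 𝒻 a c x) (hbcx : CovAll 𝒻 b c x) : False := by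
  obtain ⟨⟨ma, mb, mc, mx⟩, ⟨ab, ac, ax, bc, bx, cx⟩, E, E', hcov, e1, e2, e3, e4⟩ := h.basic
  simp only [CovAt, CovAll] at habx hacx hbcx
  have hlink : ∀ z u v, Edge 𝒻 z u v → z ≠ a → z ≠ b → z ≠ c → z ≠ x →
      (u = c ∧ v ≠ b) ∨ (v = c ∧ u ≠ b) ∨ (u = x ∧ v ≠ a) ∨ (v = x ∧ u ≠ a) ∨
        (u = a ∧ v = b) ∨ (u = b ∧ v = a) := by grind
  have hcz : ∀ z w, Edge 𝒻 c z w → (z ≠ a ∧ z ≠ b ∧ z ≠ c ∧ z ≠ x) →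
      (w ≠ a ∧ w ≠ b ∧ w ≠ c ∧ w ≠ x) → ¬ CovAt 𝒻 z c w := by
    intro z w he hz hw hcov
    have mE := h.mem_of_edge he
    refine h.false_of_star (z := z) c [b] [(x, w)] mE.2.1 mc (by grind) (by grind) (by grind)
      (by simp) fun u v he => ?_
    simp only [List.mem_cons, List.not_mem_nil, Prod.mk.injEq]
    have := hcov u v
    grind
  have hxz : ∀ z w, Edge 𝒻 x z w → (z ≠ a ∧ z ≠ b ∧ z ≠ c ∧ z ≠ x) →
      (w ≠ a ∧ w ≠ b ∧ w ≠ c ∧ w ≠ x) → ¬ CovAt 𝒻 z x w := by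
    intro z w he hz hw hcov
    have mE := h.mem_of_edge he
    refine h.false_of_star (z := z) x [a] [(c, w)] mE.2.1 mx (by grind) (by grind) (by grind)
      (by simp) fun u v he => ?_
    simp only [List.mem_cons, List.not_mem_nil, Prod.mk.injEq]
    have := hcov u v
    grind
  have hO : ∀ u z w, Edge Z u z w → (z ≠ a ∧ z ≠ b ∧ z ≠ c ∧ z ≠ x) →
      (w ≠ a ∧ w ≠ b ∧ w ≠ c ∧ w ≠ x) → False := by
    intro u z w he hz hw
    have hu : u = c ∨ u = x := by grind
    rcases hu with rfl | rfl
    · rcases h.covers he with hz' | hz' | hz' | hz'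
      · have := hz' a b; grind
      · grind
      · exact hcz w z (by grind) hw hz (by simp only [CovAt] at hz' ⊢; grind)
      · have h2 := hz' a b x
        grind
    · rcases h.covers he with hz' | hz' | hz' | hz'
      · have := hz' a b; grind
      · grind
      · exact hxz w z (by grind) hw hz (by simp only [CovAt] at hz' ⊢; grind)
      · have h2 := hz' a b c
        grind
  obtain ⟨z, u, v, he, hz⟩ := h.exists_outside
  obtain ⟨zab, zac, zbx⟩ : Edge Z a b z ∧ Edge Z a c z ∧ Edge Z b x z := by
    obtain ⟨d, hd, he1⟩ := h.closure he
    obtain ⟨d', hd', he1'⟩ := h.closure he.swap_right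
    obtain ⟨d'', hd'', he2⟩ := h.closure he1.swap_right
    grind
  have mz := (h.mem_of_edge (h.edge he)).1
  have c1 : CovAll 𝒻 a b z := by
    rcases h.covers zab with h' | h' | h' | h'
    · have := h' c x; grind
    · have := h' c x; grind
    · refine (h.false_of_few (z := z) [(a, b), (a, c), (b, x)] mz (by simp) fun u v he => ?_).elim
      simp only [List.mem_cons, List.not_mem_nil, Prod.mk.injEq]
      have := h' u v
      grind
    · exact h'
  have c2 : CovAll 𝒻 a c z := by
    rcases h.covers zac with h' | h' | h' | h'
    · have := h' b x; grind
    · have := h' b x; grind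
    · refine (h.false_of_star (z := z) c [b] [(a, b)] mz mc (by grind) (by grind) (by grind)
        (by simp) fun u v he => ?_).elim
      simp only [List.mem_cons, List.not_mem_nil, Prod.mk.injEq]
      have := h' u v
      grind
    · exact h'
  have c3 : CovAll 𝒻 b x z := by
    rcases h.covers zbx with h' | h' | h' | h'
    · have := h' a c; grind
    · have := h' a c; grind
    · refine (h.false_of_star (z := z) x [a] [(a, b)] mz mx (by grind) (by grind) (by grind)
        (by simp) fun u v he => ?_).elim
      simp only [List.mem_cons, List.not_mem_nil, Prod.mk.injEq]
      have := h' u v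
      grind
    · exact h'
  obtain ⟨w, hw, hw'⟩ := h.exists_notMem [a, b, c, x, z] (by simp)
  simp only [List.mem_cons, List.not_mem_nil, not_or] at hw'
  refine h.false_of_few (z := w) [(a, b), (c, z), (x, z)] hw (by simp) fun u v he => ?_
  simp only [List.mem_cons, List.not_mem_nil, Prod.mk.injEq]
  have d1 := c1 w u v he
  have d2 := c2 w u v he
  have d3 := c3 w u v he
  have d4 := hlink w u v he
  grind

end Tetrahedron

/-- If the edges at `p` all contain `q` or `r`, the degree of `p` is bounded by the codegrees. -/
theorem MinimalCounterexample.card_le_codegrees {V W : Finset ℕ} {𝒻 : Finset (Finset ℕ)}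
    (h : MinimalCounterexample V 𝒻) {p q r s : ℕ} (hp : p ∈ V) (hcov : CovAt 𝒻 p q r)
    (hq : ∀ y, Edge 𝒻 p q y → y = r ∨ y = s ∨ y ∈ W)
    (hr : ∀ y, Edge 𝒻 p r y → y = q ∨ y = s ∨ y ∈ W) :
    V.card - 1 ≤ 3 + #{y ∈ W | {p, q, y} ∈ 𝒻} + #{y ∈ W | {p, r, y} ∈ 𝒻} := by
  have hsub : {F ∈ 𝒻 | p ∈ F} ⊆ (({{p, q, r}, {p, q, s}, {p, r, s}} : Finset (Finset ℕ)) ∪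
      image (fun y => {p, q, y}) {y ∈ W | {p, q, y} ∈ 𝒻}) ∪
      image (fun y => {p, r, y}) {y ∈ W | {p, r, y} ∈ 𝒻} := by
    intro F hF
    obtain ⟨hF, hpF⟩ := mem_filter.1 hF
    obtain ⟨u, v, rfl, he⟩ : ∃ u v, F = {p, u, v} ∧ Edge 𝒻 p u v := by
      obtain ⟨u, v, w, rfl, he⟩ := exists_edge_of_mem hF (h.card_eq F hF)
      simp only [mem_insert, mem_singleton] at hpF
      rcases hpF with rfl | rfl | rfl
      · exact ⟨v, w, rfl, he⟩
      · exact ⟨u, w, by grind, he.swap_left⟩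
      · exact ⟨u, v, by grind, he.swap_right.swap_left⟩
    have hcross : ∀ y, y = q ∨ y = r → ∀ t, Edge 𝒻 p y t → ({p, y, t} : Finset ℕ) ∈
        (({{p, q, r}, {p, q, s}, {p, r, s}} : Finset (Finset ℕ)) ∪
        image (fun y => {p, q, y}) {y ∈ W | {p, q, y} ∈ 𝒻}) ∪
        image (fun y => {p, r, y}) {y ∈ W | {p, r, y} ∈ 𝒻} := by
      intro y hy t he
      simp only [mem_union, mem_insert, mem_singleton, mem_image, mem_filter]
      rcases hy with rfl | rfl
      · rcases hq t he with rfl | rfl | ht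
        · simp
        · simp
        · exact .inl (.inr ⟨t, ⟨ht, he.2⟩, rfl⟩)
      · rcases hr t he with rfl | rfl | ht
        · exact .inl (.inl (.inl (by grind)))
        · simp
        · exact .inr ⟨t, ⟨ht, he.2⟩, rfl⟩
    rcases hcov u v he with h' | h' | h' | h'
    · exact hcross u (.inl h') v he
    · exact hcross u (.inr h') v he
    · rw [pair_comm u v]; exact hcross v (.inl h') u he.swap_right
    · rw [pair_comm u v]; exact hcross v (.inr h') u he.swap_right
  have h1 := (h.le_degree hp).trans (card_le_card hsub)
  have h2 := card_union_le (({{p, q, r}, {p, q, s}, {p, r, s}} : Finset (Finset ℕ)) ∪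
      image (fun y => {p, q, y}) {y ∈ W | {p, q, y} ∈ 𝒻})
      (image (fun y => {p, r, y}) {y ∈ W | {p, r, y} ∈ 𝒻})
  have h3 := card_union_le ({{p, q, r}, {p, q, s}, {p, r, s}} : Finset (Finset ℕ))
      (image (fun y => {p, q, y}) {y ∈ W | {p, q, y} ∈ 𝒻})
  have h4 := card_le_three (a := ({p, q, r} : Finset ℕ)) (b := {p, q, s}) (c := {p, r, s})
  have h5 := card_image_le (f := fun y => ({p, q, y} : Finset ℕ))
    (s := {y ∈ W | {p, q, y} ∈ 𝒻})
  have h6 := card_image_le (f := fun y => ({p, r, y} : Finset ℕ))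
    (s := {y ∈ W | {p, r, y} ∈ 𝒻})
  omega

namespace Tetrahedron

variable {V : Finset ℕ} {𝒻 Z : Finset (Finset ℕ)} {a b c x : ℕ}

theorem false_of_covAll_of_covAll (h : Tetrahedron V 𝒻 Z a b c x) (habx : CovAll 𝒻 a b x)
    (hacx : CovAll 𝒻 a c x) (hbcx : CovAt 𝒻 x b c ∨ CovAll 𝒻 b c x) : False := by
  obtain ⟨⟨ma, mb, mc, mx⟩, ⟨ab, ac, ax, bc, bx, cx⟩, E, E', hcov, e1, e2, e3, e4⟩ := h.basic
  simp only [CovAt, CovAll] at habx hacx hbcx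
  rcases hbcx with hbcx | hbcx
  · obtain ⟨z, hz, hz'⟩ := h.exists_notMem [a, b, c, x] (by simp)
    simp only [List.mem_cons, List.not_mem_nil, not_or] at hz'
    refine h.false_of_few (z := z) [(a, b), (a, c), (b, x), (c, x), (b, c)] hz (by simp)
      fun u v he => ?_
    simp only [List.mem_cons, List.not_mem_nil, Prod.mk.injEq]
    have h1 := habx z u v he
    have h2 := hacx z u v he
    grind
  have hlink : ∀ z u v, Edge 𝒻 z u v → z ≠ a → z ≠ b → z ≠ c → z ≠ x →
      (u = x ∧ v ≠ a) ∨ (v = x ∧ u ≠ a) ∨ (u = a ∧ v = b) ∨ (u = b ∧ v = a) ∨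
        (u = a ∧ v = c) ∨ (u = c ∧ v = a) ∨ (u = b ∧ v = c) ∨ (u = c ∧ v = b) := by
    intro z u v he
    have h1 := habx z u v he
    have h2 := hacx z u v he
    have h3 := hbcx z u v he
    grind
  have hxz : ∀ z w, Edge 𝒻 x z w → (z ≠ a ∧ z ≠ b ∧ z ≠ c ∧ z ≠ x) →
      (w ≠ a ∧ w ≠ b ∧ w ≠ c ∧ w ≠ x) → ¬ CovAt 𝒻 z x w := by
    intro z w he hz hw hcov
    have mE := h.mem_of_edge he
    refine h.false_of_star (z := z) x [a] [] mE.2.1 mx (by grind) (by grind) (by grind)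
      (by simp) fun u v he => ?_
    simp only [List.mem_cons, List.not_mem_nil]
    have := hcov u v
    grind
  have hO : ∀ u z w, Edge Z u z w → (z ≠ a ∧ z ≠ b ∧ z ≠ c ∧ z ≠ x) →
      (w ≠ a ∧ w ≠ b ∧ w ≠ c ∧ w ≠ x) → False := by
    intro u z w he hz hw
    have hu : u = x := by grind
    subst hu
    rcases h.covers he with hz' | hz' | hz' | hz'
    · have := hz' a b; grind
    · grind
    · exact hxz w z (by grind) hw hz (by simp only [CovAt] at hz' ⊢; grind)
    · have h2 := hz' a b c
      grind
  obtain ⟨z, u, v, he, hz⟩ := h.exists_outside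
  have mz := (h.mem_of_edge (h.edge he)).1
  obtain ⟨w, hw, hw'⟩ := h.exists_notMem [a, b, c, x, z] (by simp)
  simp only [List.mem_cons, List.not_mem_nil, not_or] at hw'
  have nab : ¬ Edge Z a b z := by
    intro hab
    rcases h.covers hab with h' | h' | h' | h'
    · have := h' c x; grind
    · have := h' c x; grind
    · refine h.false_of_few (z := z) [(a, b), (a, c), (b, c), (b, x)] mz (by simp)
        fun u v he => ?_
      simp only [List.mem_cons, List.not_mem_nil, Prod.mk.injEq]
      have := h' u v
      grind
    · refine h.false_of_few (z := w) [(a, b), (a, c), (b, c), (b, x), (x, z)] hw (by simp)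
        fun u v he => ?_
      simp only [List.mem_cons, List.not_mem_nil, Prod.mk.injEq]
      have := h' w u v he
      have := hlink w u v he
      grind
  have nac : ¬ Edge Z a c z := by
    intro hac
    rcases h.covers hac with h' | h' | h' | h'
    · have := h' b x; grind
    · have := h' b x; grind
    · refine h.false_of_few (z := z) [(a, b), (a, c), (b, c), (c, x)] mz (by simp)
        fun u v he => ?_
      simp only [List.mem_cons, List.not_mem_nil, Prod.mk.injEq]
      have := h' u v
      grind
    · refine h.false_of_few (z := w) [(a, b), (a, c), (b, c), (c, x), (x, z)] hw (by simp)
        fun u v he => ?_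
      simp only [List.mem_cons, List.not_mem_nil, Prod.mk.injEq]
      have := h' w u v he
      have := hlink w u v he
      grind
  have hbc : Edge Z b c z := by
    obtain ⟨d, hd, he1⟩ := h.closure he
    obtain ⟨d', hd', he1'⟩ := h.closure he.swap_right
    grind
  rcases h.covers hbc with h' | h' | h' | h'
  · have := h' a x; grind
  · have := h' a x; grind
  · refine h.false_of_few (z := z) [(a, b), (a, c), (b, c), (b, x), (c, x)] mz (by simp)
      fun u v he => ?_
    simp only [List.mem_cons, List.not_mem_nil, Prod.mk.injEq]
    have := h' u v
    grind
  · refine h.false_of_few (z := w) [(a, b), (a, c), (b, c), (b, x), (c, x), (x, z)] hw (by simp)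
      fun u v he => ?_
    simp only [List.mem_cons, List.not_mem_nil, Prod.mk.injEq]
    have := h' w u v he
    have := hlink w u v he
    grind

theorem false_of_covAt_b_of_covAt_c_of_covAll (h : Tetrahedron V 𝒻 Z a b c x)
    (habx : CovAt 𝒻 b a x) (hacx : CovAt 𝒻 c a x) (hbcx : CovAll 𝒻 b c x) : False := by
  obtain ⟨⟨ma, mb, mc, mx⟩, ⟨ab, ac, ax, bc, bx, cx⟩, E, E', hcov, e1, e2, e3, e4⟩ := h.basic
  simp only [CovAt, CovAll] at habx hacx hbcx
  have hlink : ∀ z u v, Edge 𝒻 z u v → z ≠ a → z ≠ b → z ≠ c → z ≠ x →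
      (u = x ∧ v ≠ a) ∨ (v = x ∧ u ≠ a) ∨ (u = a ∧ v = b) ∨ (u = b ∧ v = a) ∨
        (u = a ∧ v = c) ∨ (u = c ∧ v = a) := by
    intro z u v he
    have h3 := hbcx z u v he
    grind
  have hx : ∀ z ∈ V, ∀ w ∈ V, z ≠ a → z ≠ b → z ≠ c → z ≠ x → w ≠ x → w ≠ a → w ≠ z →
      Edge 𝒻 z x w := by
    intro z hz w hw hza hzb hzc hzx hwc hwx hwz
    by_contra hn
    refine h.false_of_star (z := z) x [a, w] [(a, b), (a, c)] hz mx hzx (by grind) (by grind)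
      (by simp) fun u v he => ?_
    simp only [List.mem_cons, List.not_mem_nil, Prod.mk.injEq]
    grind
  have ha : ∀ z ∈ V, z ≠ a → z ≠ b → z ≠ c → z ≠ x → Edge 𝒻 z a b ∧ Edge 𝒻 z a c := by
    intro z hz hza hzb hzc hzx
    constructor
    · by_contra hn
      refine h.false_of_star (z := z) x [a] [(a, c)] hz mx hzx (by grind) (by grind)
        (by simp) fun u v he => ?_
      simp only [List.mem_cons, List.not_mem_nil, Prod.mk.injEq]
      grind
    · by_contra hn
      refine h.false_of_star (z := z) x [a] [(a, b)] hz mx hzx (by grind) (by grind)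
        (by simp) fun u v he => ?_
      simp only [List.mem_cons, List.not_mem_nil, Prod.mk.injEq]
      grind
  obtain ⟨z, hz, hz'⟩ := h.exists_notMem [a, b, c, x] (by simp)
  obtain ⟨w, hw, hw'⟩ := h.exists_notMem [a, b, c, x, z] (by simp)
  simp only [List.mem_cons, List.not_mem_nil, not_or] at hz' hw'
  have h1 := ha z hz (by grind) (by grind) (by grind) (by grind)
  have h2 := hx z hz b mb (by grind) (by grind) (by grind) (by grind) (by grind) (by grind)
    (by grind)
  have h3 := hx z hz c mc (by grind) (by grind) (by grind) (by grind) (by grind) (by grind)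
    (by grind)
  have h4 := hx w hw c mc (by grind) (by grind) (by grind) (by grind) (by grind) (by grind)
    (by grind)
  rcases h.edge_cases (a := a) (b := b) (c := z) (by grind) with h' | h' | h' | h' | h' | h' | h'
  · have := h' c; grind
  · have := h' c; grind
  · have := h' x; grind
  · have := h' c x; grind
  · have := h' c x; grind
  · have := h' c x; grind
  · have := h' c x w; grind

/-- If every vertex outside `a b c x` lies in at most two of the triples through one of the pairs
`a b`, `a c`, `x b`, `x c`, and some vertex in none, the degrees of `a` and `x` are too small. -/
theorem false_of_codegrees (h : Tetrahedron V 𝒻 Z a b c x) (hx : CovAt 𝒻 x b c) {z : ℕ}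
    (mz : z ∈ V) (hz : z ≠ a ∧ z ≠ b ∧ z ≠ c ∧ z ≠ x)
    (hzl : ∀ u v, Edge 𝒻 z u v →
      (u ≠ a ∧ u ≠ b ∧ u ≠ c ∧ u ≠ x) ∧ (v ≠ a ∧ v ≠ b ∧ v ≠ c ∧ v ≠ x))
    (hthree : ∀ p q r s, (p = a ∧ s = x ∨ p = x ∧ s = a) → (q = b ∧ r = c ∨ q = c ∧ r = b) →
      ∀ y, y ≠ a → y ≠ b → y ≠ c → y ≠ x → y ≠ z →
      ¬ (Edge 𝒻 p q y ∧ Edge 𝒻 p r y ∧ Edge 𝒻 q s y)) : False := by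
  obtain ⟨⟨ma, mb, mc, mx⟩, ⟨ab, ac, ax, bc, bx, cx⟩, E, -, -, -⟩ := h.basic
  set W := V \ {a, b, c, x, z} with hW
  have hWc : #W + 5 = #V := by
    have h1 : ({a, b, c, x, z} : Finset ℕ) ⊆ V := by
      intro t; simp only [mem_insert, mem_singleton]; grind
    have h2 : #({a, b, c, x, z} : Finset ℕ) = 5 := by
      rw [card_insert_of_notMem, card_insert_of_notMem, card_insert_of_notMem,
        card_insert_of_notMem, card_singleton]
      all_goals simp only [mem_insert, mem_singleton]; grind
    rw [hW, ← h2]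
    exact card_sdiff_add_card_eq_card h1
  have hWm : ∀ p q y, (p = a ∨ p = x) → (q = b ∨ q = c) → Edge 𝒻 p q y →
      y ≠ a → y ≠ b → y ≠ c → y ≠ x → y ∈ W := by
    intro p q y hp hq he hya hyb hyc hyx
    have hyz : y ≠ z := by
      rintro rfl
      have := hzl p q he.swap_right.swap_left
      grind
    simp only [hW, mem_sdiff, mem_insert, mem_singleton]
    exact ⟨(h.mem_of_edge he).2.2, by simp [hya, hyb, hyc, hyx, hyz]⟩
  have d1 := h.card_le_codegrees (W := W) (s := x) ma h.cov
    (fun y he => by have := hWm a b y (by simp) (by simp) he; grind)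
    (fun y he => by have := hWm a c y (by simp) (by simp) he; grind)
  have d2 := h.card_le_codegrees (W := W) (s := a) mx hx
    (fun y he => by have := hWm x b y (by simp) (by simp) he; grind)
    (fun y he => by have := hWm x c y (by simp) (by simp) he; grind)
  have hsum : #{y ∈ W | {a, b, y} ∈ 𝒻} + #{y ∈ W | {a, c, y} ∈ 𝒻} + #{y ∈ W | {x, b, y} ∈ 𝒻} +
      #{y ∈ W | {x, c, y} ∈ 𝒻} ≤ ∑ y ∈ W, 2 := by
    simp only [card_filter]
    rw [← sum_add_distrib, ← sum_add_distrib, ← sum_add_distrib]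
    refine sum_le_sum fun y hy => ?_
    simp only [hW, mem_sdiff, mem_insert, mem_singleton] at hy
    have k1 := hthree a b c x (by simp) (by simp) y
    have k2 := hthree a c b x (by simp) (by simp) y
    have k3 := hthree x b c a (by simp) (by simp) y
    have k4 := hthree x c b a (by simp) (by simp) y
    have hE : ∀ p q, ({p, q, y} ∈ 𝒻) → p ≠ q → p ≠ y → q ≠ y → Edge 𝒻 p q y :=
      fun p q hm h1 h2 h3 => ⟨⟨h1, h2, h3⟩, hm⟩
    have l1 := hE a b
    have l2 := hE a c
    have l3 := hE x b
    have l4 := hE x c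
    grind
  rw [sum_const, smul_eq_mul] at hsum
  have := h.eight_le
  omega

theorem false_of_covAt_b_of_covAt_c_of_covAt_x (h : Tetrahedron V 𝒻 Z a b c x)
    (habx : CovAt 𝒻 b a x) (hacx : CovAt 𝒻 c a x) (hbcx : CovAt 𝒻 x b c) : False := by
  obtain ⟨⟨ma, mb, mc, mx⟩, ⟨ab, ac, ax, bc, bx, cx⟩, E, E', hcov, e1, e2, e3, e4⟩ := h.basic
  have hx := hbcx
  simp only [CovAt] at habx hacx hbcx
  have hlink : ∀ z u v, Edge 𝒻 z u v → z ≠ a → z ≠ b → z ≠ c → z ≠ x →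
      ((u = a ∨ u = x) ∧ (v = b ∨ v = c)) ∨ ((v = a ∨ v = x) ∧ (u = b ∨ u = c)) ∨
      (u ≠ a ∧ u ≠ b ∧ u ≠ c ∧ u ≠ x) ∧ (v ≠ a ∧ v ≠ b ∧ v ≠ c ∧ v ≠ x) := by
    intro z u v he
    grind
  have hmid : ∀ p q r s, (p = a ∧ s = x ∨ p = x ∧ s = a) → (q = b ∧ r = c ∨ q = c ∧ r = b) →
      ∀ y ∈ V, y ≠ a → y ≠ b → y ≠ c → y ≠ x → CovAt 𝒻 y p q →
      False := by
    intro p q r s hps hqr y hy hya hyb hyc hyx h'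
    refine h.false_of_few (z := y) [(p, q), (p, r), (q, s)] hy (by simp) fun u v he => ?_
    simp only [List.mem_cons, List.not_mem_nil, Prod.mk.injEq]
    have := h' u v
    have := hlink y u v
    grind
  have hall : ∀ p q r s, (p = a ∧ s = x ∨ p = x ∧ s = a) → (q = b ∧ r = c ∨ q = c ∧ r = b) →
      ∀ y, Edge Z p q y → y ≠ a → y ≠ b → y ≠ c → y ≠ x → CovAll 𝒻 p q y := by
    intro p q r s hps hqr y he hya hyb hyc hyx
    rcases h.covers he with h' | h' | h' | h'
    · have := h' r s; grind
    · have := h' r s; grind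
    · exact (hmid p q r s hps hqr y (h.mem_of_edge (h.edge he)).2.2 hya hyb hyc hyx h').elim
    · exact h'
  have hO : ∀ z u v, Edge Z z u v → (z ≠ a ∧ z ≠ b ∧ z ≠ c ∧ z ≠ x) →
      (u ≠ a ∧ u ≠ b ∧ u ≠ c ∧ u ≠ x) ∧ (v ≠ a ∧ v ≠ b ∧ v ≠ c ∧ v ≠ x) := by
    intro z u v he hz
    by_contra hcon
    obtain ⟨i1, i2, i3, i4⟩ : Edge Z a b z ∧ Edge Z a c z ∧ Edge Z x b z ∧ Edge Z x c z := by
      have hcl : ∀ p q r s, (p = a ∧ s = x ∨ p = x ∧ s = a) → (q = b ∧ r = c ∨ q = c ∧ r = b) →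
          Edge Z z p q → Edge Z z p r ∧ Edge Z z s q := by
        intro p q r s hps hqr hpq
        obtain ⟨d, hd, he1⟩ := h.closure hpq
        obtain ⟨d', hd', he2⟩ := h.closure hpq.swap_right
        have l1 := hlink z p d (h.edge he1)
        have l2 := hlink z q d' (h.edge he2)
        grind
      have l := hlink z u v (h.edge he) hz.1 hz.2.1 hz.2.2.1 hz.2.2.2
      have k1 := hcl a b c x (by simp) (by simp)
      have k2 := hcl a c b x (by simp) (by simp)
      have k3 := hcl x b c a (by simp) (by simp)
      have k4 := hcl x c b a (by simp) (by simp)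
      clear hcl
      grind
    have j1 := hall a b c x (by simp) (by simp) z i1 hz.1 hz.2.1 hz.2.2.1 hz.2.2.2
    have j2 := hall a c b x (by simp) (by simp) z i2 hz.1 hz.2.1 hz.2.2.1 hz.2.2.2
    have j3 := hall x b c a (by simp) (by simp) z i3 hz.1 hz.2.1 hz.2.2.1 hz.2.2.2
    have j4 := hall x c b a (by simp) (by simp) z i4 hz.1 hz.2.1 hz.2.2.1 hz.2.2.2
    obtain ⟨w, hw, hw'⟩ := h.exists_notMem [a, b, c, x, z] (by simp)
    simp only [List.mem_cons, List.not_mem_nil, not_or] at hw'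
    have mz := (h.mem_of_edge (h.edge he)).1
    refine h.false_of_star (z := w) z [a] [] hw mz (by grind) (by grind) (by grind)
      (by simp) fun u v he => ?_
    simp only [List.mem_cons, List.not_mem_nil]
    have := j1 w u v he
    have := j2 w u v he
    have := j3 w u v he
    have := j4 w u v he
    have := hlink w u v he
    grind
  obtain ⟨z, mz, hz, hzl⟩ : ∃ z ∈ V, (z ≠ a ∧ z ≠ b ∧ z ≠ c ∧ z ≠ x) ∧ ∀ u v, Edge 𝒻 z u v →
      (u ≠ a ∧ u ≠ b ∧ u ≠ c ∧ u ≠ x) ∧ (v ≠ a ∧ v ≠ b ∧ v ≠ c ∧ v ≠ x) := by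
    obtain ⟨z, u, v, he, hz⟩ := h.exists_outside
    have huv := hO z u v he hz
    have mE := h.mem_of_edge (h.edge he)
    rcases h.covers he with h' | h' | h' | h'
    · exact ⟨z, mE.1, hz, fun p q hp => by
        have := h' p q hp; have := hlink z p q hp; grind⟩
    · exact ⟨u, mE.2.1, huv.1, fun p q hp => by
        have := h' p q hp; have := hlink u p q hp; grind⟩
    · exact ⟨v, mE.2.2, huv.2, fun p q hp => by
        have := h' p q hp; have := hlink v p q hp; grind⟩
    · have := h' a b c; grind
  have hthree : ∀ p q r s, (p = a ∧ s = x ∨ p = x ∧ s = a) → (q = b ∧ r = c ∨ q = c ∧ r = b) →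
      ∀ y, y ≠ a → y ≠ b → y ≠ c → y ≠ x → y ≠ z →
      ¬ (Edge 𝒻 p q y ∧ Edge 𝒻 p r y ∧ Edge 𝒻 q s y) := by
    rintro p q r s hps hqr y hya hyb hyc hyx hyz ⟨he, he1, he2⟩
    have my := (h.mem_of_edge he).2.2
    rcases h.edge_cases he with h' | h' | h' | h' | h' | h' | h'
    · have := h' r; grind
    · have := h' r; grind
    · have := h' s; grind
    · have := h' r s; grind
    · have := h' r s; grind
    · exact hmid p q r s hps hqr y my hya hyb hyc hyx h'
    · refine h.false_of_star (z := z) y [a] [] mz my (by grind) (by grind) (by grind)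
        (by simp) fun u v he => ?_
      simp only [List.mem_cons, List.not_mem_nil]
      have := h' z u v he
      have := hzl u v he
      grind
  exact h.false_of_codegrees hx mz hz hzl hthree

end Tetrahedron

theorem Tetrahedron.false {V : Finset ℕ} {𝒻 Z : Finset (Finset ℕ)} {a b c x : ℕ}
    (h : Tetrahedron V 𝒻 Z a b c x) : False := by
  have hsw := h.swap
  obtain ⟨-, -, habx, hacx, hbcx⟩ := h.cases_faces
  obtain ⟨-, -, -, -, hcbx⟩ := hsw.cases_faces
  rcases habx with h1 | h1 | h1 <;> rcases hacx with h2 | h2 | h2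
  · rcases hbcx with h3 | h3
    · exact h.false_of_covAt_b_of_covAt_c_of_covAt_x h1 h2 h3
    · exact h.false_of_covAt_b_of_covAt_c_of_covAll h1 h2 h3
  · exact h.false_of_covAt_b_of_covAt_x h1 h2 hbcx
  · rcases hbcx with h3 | h3
    · exact h.false_of_covAt_b_of_covAll_of_covAt_x h1 h2 h3
    · exact h.false_of_covAt_b_of_covAll_of_covAll h1 h2 h3
  · exact hsw.false_of_covAt_b_of_covAt_x h2 h1 hcbx
  · exact h.false_of_covAt_x_of_covAt_x h1 h2
  · exact h.false_of_covAt_x_of_covAll h1 h2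
  · rcases hcbx with h3 | h3
    · exact hsw.false_of_covAt_b_of_covAll_of_covAt_x h2 h1 h3
    · exact hsw.false_of_covAt_b_of_covAll_of_covAll h2 h1 h3
  · exact hsw.false_of_covAt_x_of_covAll h2 h1
  · exact h.false_of_covAll_of_covAll h1 h2 hbcx

namespace MinimalCounterexample

variable {V : Finset ℕ} {𝒻 : Finset (Finset ℕ)}

theorem not_covAt (h : MinimalCounterexample V 𝒻) {a b c : ℕ} (habc : Edge 𝒻 a b c) :
    ¬ CovAt 𝒻 a b c := by
  intro hcov
  obtain ⟨x, abx, acx, bcx⟩ := h.exists_tetrahedron habc hcov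
  obtain ⟨Z, hZ, hZn, hZc⟩ := exists_pairClosed (V := V) (𝒢 := 𝒻.erase {a, b, c})
    (fun F hF => h.subset F (mem_of_mem_erase hF)) (fun F hF => h.card_eq F (mem_of_mem_erase hF))
    (by rw [card_erase_of_mem habc.2]; have := h.lt_card; omega)
  exact (Tetrahedron.of_not_edge h (hZ.trans (erase_subset _ _)) hZc hZn
    (fun he => (mem_erase.1 (hZ he.2)).1 rfl) habc abx acx bcx hcov).false

theorem false (h : MinimalCounterexample V 𝒻) : False := by
  obtain ⟨Z, hZ, ⟨F, hF⟩, hZc⟩ := exists_pairClosed h.subset h.card_eq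
    (by have := h.lt_card; omega)
  have hZ3 : ∀ F ∈ Z, F.card = 3 := fun F hF => h.card_eq F (hZ hF)
  have hall : ∀ {u v w : ℕ}, Edge Z u v w → CovAll 𝒻 u v w := by
    intro u v w he
    have he' := he.mono hZ
    rcases h.edge_cases_of_pairClosed hZ hZc he with h' | h' | h' | h'
    · exact (h.not_covAt he' h').elim
    · exact (h.not_covAt he'.swap_left h').elim
    · exact (h.not_covAt he'.swap_right.swap_left h').elim
    · exact h'
  obtain ⟨a, b, c, -, habc⟩ := exists_edge_of_mem hF (hZ3 F hF)
  obtain ⟨d, hd, habd⟩ := hZc.exists_edge hZ3 habc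
  obtain ⟨e, he, hace⟩ := hZc.exists_edge hZ3 habc.swap_right
  obtain ⟨f, hf, hbcf⟩ := hZc.exists_edge hZ3 habc.swap_left.swap_right
  obtain ⟨w, hw, hw'⟩ := h.exists_notMem [a, b, c, d, e, f] (by simp)
  simp only [List.mem_cons, List.not_mem_nil, not_or] at hw'
  refine h.false_of_few (z := w) [(a, b), (a, c), (a, f), (b, c), (b, e), (c, d)] hw (by simp)
    fun u v huv => ?_
  simp only [List.mem_cons, Prod.mk.injEq]
  have h1 := hall habc w u v huv
  have h2 := hall habd w u v huv
  have h3 := hall hace w u v huv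
  have h4 := hall hbcf w u v huv
  have n1 := habc.1
  have n2 := habd.1
  have n3 := hace.1
  have n4 := hbcf.1
  have n5 := huv.1
  grind

end MinimalCounterexample

theorem Unshattered.card_le {n : ℕ} (hn : 7 ≤ n) {V : Finset ℕ} {𝒻 : Finset (Finset ℕ)}
    (hV : V.card = n) (h𝒻 : Unshattered V 𝒻) : 𝒻.card ≤ (n - 1).choose 2 + 1 := by
  induction n, hn using Nat.le_induction generalizing V 𝒻 with
  | base => simpa [Nat.choose] using h𝒻.card_le_of_card_eq_seven hV
  | succ n hn ih =>
    by_contra! hlt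
    have hm : MinimalCounterexample V 𝒻 :=
      { h𝒻 with
        eight_le := by omega
        lt_card := by rwa [hV]
        card_le := fun U 𝒢 hU h𝒢 => by
          rw [hV, Nat.add_sub_add_right n 1 1]
          exact ih (by omega) h𝒢 }
    exact hm.false

/-- If `n ≥ 7` and `𝒻` is a family of 3-element subsets of `[n]` that shatters no
3-element subset of `[n]`, then `|𝒻| ≤ C(n-1,2) + 1`. -/
theorem stmt_0 (n : ℕ) (hn : 7 ≤ n) (𝒻 : Finset (Finset ℕ))
    (hsub : ∀ F ∈ 𝒻, F ⊆ Finset.Icc 1 n) (hcard : ∀ F ∈ 𝒻, F.card = 3)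
    (hVC : ∀ S ⊆ Finset.Icc 1 n, S.card = 3 → ¬ Shatters 𝒻 S) :
    𝒻.card ≤ (n - 1).choose 2 + 1 :=
  Unshattered.card_le hn (V := Icc 1 n) (by simp)
    ⟨hsub, hcard, fun F hF => hVC F (hsub F hF) (hcard F hF)⟩
end

section
/- Every family 𝒻 of 3-element subsets of [6] that shatters no 3-element subset of [6] satisfies |𝒻| ≤ 13. -/
/-- The number whose binary digits equal to `1` are at the positions in `l`. -/
def bitMask (l : List ℕ) : ℕ :=
  l.foldr (fun i acc => 2 ^ i ||| acc) 0

theorem testBit_bitMask (l : List ℕ) (i : ℕ) : (bitMask l).testBit i = true ↔ i ∈ l := by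
  induction l with
  | nil => simp [bitMask]
  | cons a l ih =>
    rw [bitMask, List.foldr_cons, ← bitMask, Nat.testBit_or, Bool.or_eq_true, ih,
      Nat.testBit_two_pow, decide_eq_true_eq, List.mem_cons, eq_comm]

/-- Branching search for covers: every member of the first argument lists alternatives, one of which
has to be contained in a set extending `cur`. The result is `true` only if each such set has at
least `n` elements outside `cur`. -/
def forcesNew : List (List (List ℕ)) → ℕ → List ℕ → Bool
  | [], n, _ => Nat.beq n 0
  | bs :: rest, n, cur =>
    Nat.beq n 0 ||
      bif bs.any (fun b => b.all fun i => cur.any (Nat.beq i)) then forcesNew rest n cur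
      else Nat.beq n 1 || bs.all fun b =>
        let new := b.filter fun i => !cur.any (Nat.beq i)
        forcesNew rest (n - new.length) (new ++ cur)

theorem le_card_sdiff_of_forcesNew {M : Finset ℕ} :
    ∀ {L : List (List (List ℕ))} {n : ℕ} {cur : List ℕ}, forcesNew L n cur = true →
      (∀ bs ∈ L, ∃ b ∈ bs, b.Nodup ∧ b.toFinset ⊆ M) → n ≤ (M \ cur.toFinset).card
  | [], n, cur, h, _ => (Nat.eq_of_beq_eq_true h).le.trans (Nat.zero_le _)
  | bs :: rest, n, cur, h, hL => by
    have hrest := fun c hc => hL c (List.mem_cons_of_mem bs hc)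
    have hmem : ∀ i, cur.any (Nat.beq i) = true ↔ i ∈ cur := fun i => by simp
    rw [forcesNew, Bool.or_eq_true] at h
    rcases h with h | h
    · exact (Nat.eq_of_beq_eq_true h).le.trans (Nat.zero_le _)
    rw [Bool.cond_eq_ite] at h
    split_ifs at h with hany
    · exact le_card_sdiff_of_forcesNew h hrest
    obtain ⟨b, hb, hnodup, hbM⟩ := hL bs List.mem_cons_self
    rw [Bool.or_eq_true] at h
    rcases h with h | h
    · rw [Nat.eq_of_beq_eq_true h, Nat.one_le_iff_ne_zero, Finset.card_ne_zero,
        Finset.sdiff_nonempty]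
      refine fun hM => hany (List.any_eq_true.2 ⟨b, hb, List.all_eq_true.2 fun i hi => ?_⟩)
      exact (hmem i).2 (List.mem_toFinset.1 (hM (hbM (List.mem_toFinset.2 hi))))
    · set new := b.filter fun i => !cur.any (Nat.beq i) with hnew
      have hle := le_card_sdiff_of_forcesNew (List.all_eq_true.1 h b hb) hrest
      have hsub : new.toFinset ⊆ M \ cur.toFinset := fun i hi => by
        rw [List.mem_toFinset, hnew, List.mem_filter, Bool.not_eq_true', ← Bool.not_eq_true,
          hmem] at hi
        exact Finset.mem_sdiff.2
          ⟨hbM (List.mem_toFinset.2 hi.1), fun hc => hi.2 (List.mem_toFinset.1 hc)⟩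
      have hcard := Finset.card_sdiff_add_card_eq_card hsub
      rw [List.toFinset_card_of_nodup (hnodup.filter _), ← hnew] at hcard
      rw [List.toFinset_append, Finset.union_comm, ← Finset.sup_eq_union,
        ← sdiff_sdiff_left, ← hnew] at hle
      omega

/-- The subset of `[6]` described by the binary digits `1, …, 6` of `m`. -/
def maskSet (m : ℕ) : Finset ℕ :=
  (Finset.Icc 1 6).filter fun i => m.testBit i = true

theorem maskSet_land (m n : ℕ) : maskSet (m &&& n) = maskSet m ∩ maskSet n := by
  ext i
  simp only [maskSet, Finset.mem_filter, Finset.mem_inter, Nat.testBit_and, Bool.and_eq_true]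
  tauto

theorem maskSet_bitMask {l : List ℕ} (h : ∀ i ∈ l, i ∈ Finset.Icc 1 6) :
    maskSet (bitMask l) = l.toFinset := by
  ext i
  rw [maskSet, Finset.mem_filter, testBit_bitMask, List.mem_toFinset]
  exact ⟨And.right, fun hi => ⟨h i hi, hi⟩⟩

theorem List.Nodup.exists_sublist_toFinset_eq {α : Type*} [DecidableEq α] {l : List α}
    (hl : l.Nodup) {T : Finset α} (hT : T ⊆ l.toFinset) :
    ∃ t : List α, t.Sublist l ∧ t.length = T.card ∧ t.toFinset = T := by
  have ht : (l.filter (· ∈ T)).toFinset = T := by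
    rw [List.toFinset_filter]
    simpa only [decide_eq_true_eq, Finset.filter_mem_eq_inter, Finset.inter_eq_right] using hT
  exact ⟨_, List.filter_sublist, by rw [← List.toFinset_card_of_nodup (hl.filter _), ht], ht⟩

/-- The bit masks of the 3-element subsets of `[6]`. -/
def tripleMasks : List ℕ :=
  (List.sublistsLen 3 [1, 2, 3, 4, 5, 6]).map bitMask

/-- For each 3-element subset of `[6]`, the fibers of the trace map on it, as lists of masks. -/
def traceFibers : List (List (List ℕ)) :=
  (List.sublistsLen 3 [1, 2, 3, 4, 5, 6]).map fun s => s.sublists.map fun t =>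
    tripleMasks.filter fun m => Nat.beq (m &&& bitMask s) (bitMask t)

theorem forcesNew_traceFibers : forcesNew traceFibers 7 [] = true := by
  decide +kernel

theorem Icc_one_six_eq_toFinset : Finset.Icc 1 6 = [1, 2, 3, 4, 5, 6].toFinset := by
  decide

theorem exists_mem_tripleMasks {F : Finset ℕ} (hF : F ⊆ Finset.Icc 1 6) (hcard : F.card = 3) :
    ∃ m ∈ tripleMasks, maskSet m = F := by
  obtain ⟨l, hl, hlen, rfl⟩ := List.Nodup.exists_sublist_toFinset_eq (by decide)
    (Icc_one_six_eq_toFinset ▸ hF)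
  exact ⟨_, List.mem_map_of_mem (List.mem_sublistsLen.2 ⟨hl, hlen.trans hcard⟩),
    maskSet_bitMask fun i hi => hF (List.mem_toFinset.2 hi)⟩

/-- Every family of 3-element subsets of `[6]` that shatters no 3-element subset of `[6]`
has at most 13 members. -/
theorem stmt_2 (𝒻 : Finset (Finset ℕ))
    (hsub : ∀ F ∈ 𝒻, F ⊆ Finset.Icc 1 6) (hcard : ∀ F ∈ 𝒻, F.card = 3)
    (hVC : ∀ S ⊆ Finset.Icc 1 6, S.card = 3 → ¬ Shatters 𝒻 S) :
    𝒻.card ≤ 13 := by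
  set M := tripleMasks.toFinset.filter (fun m => maskSet m ∉ 𝒻) with hM
  have hmissing : 7 ≤ (M \ [].toFinset).card := by
    refine le_card_sdiff_of_forcesNew forcesNew_traceFibers ?_
    simp only [traceFibers, List.mem_map, forall_exists_index, and_imp]
    rintro _ s hs rfl
    obtain ⟨hsl, hlen⟩ := List.mem_sublistsLen.1 hs
    have hnodup : s.Nodup := hsl.nodup (by decide)
    have hS : ∀ i ∈ s, i ∈ Finset.Icc 1 6 := fun i hi =>
      Icc_one_six_eq_toFinset ▸ List.mem_toFinset.2 (hsl.subset hi)
    have hns := hVC s.toFinset (fun i hi => hS i (List.mem_toFinset.1 hi))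
      (by rw [List.toFinset_card_of_nodup hnodup, hlen])
    simp only [Shatters, not_forall, not_exists, not_and] at hns
    obtain ⟨T, hT, hTF⟩ := hns
    obtain ⟨t, hts, -, rfl⟩ := hnodup.exists_sublist_toFinset_eq hT
    refine ⟨_, List.mem_map_of_mem (List.mem_sublists.2 hts),
      List.Nodup.filter _ (by decide +kernel), fun m hm => ?_⟩
    obtain ⟨hm, hmt⟩ := List.mem_filter.1 (List.mem_toFinset.1 hm)
    refine Finset.mem_filter.2 ⟨List.mem_toFinset.2 hm, fun hmem => hTF _ hmem ?_⟩
    rw [← maskSet_bitMask hS, ← maskSet_land, Nat.eq_of_beq_eq_true hmt,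
      maskSet_bitMask fun i hi => hS i (hts.subset hi)]
  have hsubset : 𝒻 ⊆ (tripleMasks.toFinset \ M).image maskSet := fun F hF => by
    obtain ⟨m, hm, rfl⟩ := exists_mem_tripleMasks (hsub F hF) (hcard F hF)
    refine Finset.mem_image_of_mem _ (Finset.mem_sdiff.2 ⟨List.mem_toFinset.2 hm, fun hmM => ?_⟩)
    exact (Finset.mem_filter.1 hmM).2 hF
  have hle := (Finset.card_le_card hsubset).trans Finset.card_image_le
  have hcount : tripleMasks.toFinset.card = 20 := by decide +kernel
  rw [Finset.card_sdiff_of_subset (Finset.filter_subset _ _), hcount, ← hM] at hle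
  rw [List.toFinset_nil, Finset.sdiff_empty] at hmissing
  omega
end

section
/- Every family 𝒻 of 3-element subsets of [7] that shatters no 3-element subset of [7] satisfies |𝒻| ≤ C(6, 2) + 1 = 16. -/
namespace TripleSearch

/-! ### Kernel-friendly combinators -/

/-- `List.foldr`, written with the recursor so that the kernel evaluates it quickly. -/
noncomputable def fold {α β : Type} (f : α → β → β) (b : β) (l : List α) : β :=
  List.rec (motive := fun _ => β) b (fun a _ ih => f a ih) l

/-- `cond`, written with the recursor so that the kernel evaluates it quickly. -/
noncomputable abbrev sel {α : Type} (b : Bool) (x y : α) : α :=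
  Bool.rec (motive := fun _ => α) y x b

/-! ### Triples, traces and counting, encoded in bits -/

/-- The 3-element subsets of `{0, …, 6}`, each encoded by its binary indicator. -/
def triples : List ℕ :=
  [7, 11, 13, 14, 19, 21, 22, 25, 26, 28, 35, 37, 38, 41, 42, 44, 49, 50, 52, 56, 67, 69, 70, 73,
    74, 76, 81, 82, 84, 88, 97, 98, 100, 104, 112]

def triple (i : ℕ) : ℕ := triples.getD i 0

/-- The octal digits of this number are the bit counts of `0, …, 127`. -/
noncomputable def bitCounts : ℕ :=
  fold (fun m n => ((List.range 7).filter m.testBit).length * 8 ^ m + n) 0 (List.range 128)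

/-- The number of ones among the seven lowest bits. -/
noncomputable def count7 (x : ℕ) : ℕ :=
  Nat.mod (Nat.shiftRight bitCounts (Nat.mul 3 (Nat.mod x 128))) 8

/-- The number of ones among the 35 lowest bits. -/
noncomputable def count35 (x : ℕ) : ℕ :=
  Nat.add (count7 x) (Nat.add (count7 (Nat.shiftRight x 7)) (Nat.add (count7 (Nat.shiftRight x 14))
    (Nat.add (count7 (Nat.shiftRight x 21)) (count7 (Nat.shiftRight x 28)))))

/-- The set of indices of triples whose trace on `S` is `T`. -/
noncomputable def traceMask (S T : ℕ) : ℕ :=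
  fold (fun i m => bif triple i &&& S == T then 2 ^ i ||| m else m) 0 (List.range 35)

/-- For each triple, the masks of its traces on its subsets `T` with `k` elements, `k ∈ ks`. -/
noncomputable def table (ks : List ℕ) : List (ℕ × List ℕ) :=
  (List.range 35).map fun i => (2 ^ i,
    ((List.range 128).filter fun T => T &&& triple i == T && ks.contains (count7 T)).map
      (traceMask (triple i)))

/-! ### The search -/

/-- Some member of `l` is a subset of `m`. -/
noncomputable def anySubset (m : ℕ) (l : List ℕ) : Bool :=
  fold (fun T b => sel (Nat.beq (Nat.land T m) T) true b) false l

/-- The members of `l` that are disjoint from `m`. -/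
noncomputable def disjoints (m : ℕ) (l : List ℕ) : List ℕ :=
  fold (fun T r => sel (Nat.beq (Nat.land T m) 0) (T :: r) r) [] l

noncomputable def length (l : List ℕ) : ℕ := fold (fun _ n => Nat.succ n) 0 l

/-- Drop the entries that are excluded or already satisfied, and the options that are violated. -/
noncomputable def prune (inn out : ℕ) (l : List (ℕ × List ℕ)) : List (ℕ × List ℕ) :=
  fold (fun e r => sel (Nat.beq (Nat.land e.1 out) e.1) r
    (sel (anySubset out e.2) r ((e.1, disjoints inn e.2) :: r))) [] l

/-- An entry of `l` with fewer than `n` options, as few as possible; `e` if there is none. -/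
noncomputable def pick (l : List (ℕ × List ℕ)) : ℕ → ℕ × List ℕ → ℕ × List ℕ :=
  fold (fun e rec n b => sel (Nat.ble n (length e.2)) (rec n b) (rec (length e.2) e))
    (fun _ b => b) l

/-- Whether branching refutes the existence of a family of at least 17 triples that contains `inn`,
avoids `out` and, for each entry of `l` whose triple it contains, avoids one of the options. -/
noncomputable def refutes (k : ℕ) : List (ℕ × List ℕ) → ℕ → ℕ → Bool :=
  Nat.rec (motive := fun _ => List (ℕ × List ℕ) → ℕ → ℕ → Bool) (fun _ _ _ => false)
    (fun _ rec l inn out => sel (Nat.ble 19 (count35 out)) true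
      (List.rec (motive := fun _ => Bool) false (fun e l _ =>
        (fun r : ℕ × List ℕ =>
          sel (sel (Nat.beq (Nat.land r.1 inn) r.1) true (rec (e :: l) inn (Nat.lor out r.1)))
            (fold (fun T b => sel (rec (e :: l) (Nat.lor inn r.1) (Nat.lor out T)) b false) true r.2)
            false)
        (pick l (length e.2) e)) (prune inn out l))) k

/-- The singleton `{i}` if bit `j` of `c` is set. -/
def bitMask (c j i : ℕ) : ℕ := bif c.testBit j then 2 ^ i else 0

/-- The triples `{0, 1, x}` and `{0, 2, x}` selected by the code of `x`, for `x = 3, 4, 5, 6`. -/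
def codeMask (c₃ c₄ c₅ c₆ : ℕ) : ℕ :=
  bitMask c₃ 0 1 ||| bitMask c₃ 1 2 ||| bitMask c₄ 0 4 ||| bitMask c₄ 1 5 |||
    bitMask c₅ 0 10 ||| bitMask c₅ 1 11 ||| bitMask c₆ 0 20 ||| bitMask c₆ 1 21

/-- The search succeeds whenever `{0, 1, 2}` is a member that has no trace `T`, for all
increasing sequences of codes. -/
def RefutesAll (ks : List ℕ) (T : ℕ) : Prop :=
  ∀ c₆ < 4, ∀ c₅ < c₆ + 1, ∀ c₄ < c₅ + 1, ∀ c₃ < c₄ + 1,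
    refutes 36 (table ks) (1 ||| codeMask c₃ c₄ c₅ c₆)
      (traceMask 7 T ||| codeMask (3 - c₃) (3 - c₄) (3 - c₅) (3 - c₆)) = true

theorem refutesAll_singleton : RefutesAll [0, 1, 2] 1 := by unfold RefutesAll; decide +kernel

theorem refutesAll_pair : RefutesAll [0, 2] 6 := by unfold RefutesAll; decide +kernel

theorem refutesAll_empty : RefutesAll [0] 0 := by unfold RefutesAll; decide +kernel

/-! ### Soundness of the search -/

/-- All indices in the mask `m` satisfy `p`. -/
def Within (p : ℕ → Prop) (m : ℕ) : Prop := ∀ i, m.testBit i → p i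

/-- An entry is sound if its triple, when present, forces one of its options to be absent. -/
def Sound (p : ℕ → Prop) (e : ℕ × List ℕ) : Prop :=
  ∃ s, e.1 = 2 ^ s ∧ (p s → ∃ T ∈ e.2, Within (¬p ·) T)

theorem Within.lor {p : ℕ → Prop} {a b : ℕ} (ha : Within p a) (hb : Within p b) :
    Within p (a ||| b) := by
  intro i hi
  rw [Nat.testBit_or, Bool.or_eq_true] at hi
  exact hi.elim (ha i) (hb i)

theorem within_two_pow {p : ℕ → Prop} {i : ℕ} (h : p i) : Within p (2 ^ i) := by
  intro j hj
  rw [Nat.testBit_two_pow, decide_eq_true_eq] at hj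
  exact hj ▸ h

theorem within_bitMask {p : ℕ → Prop} {c j i : ℕ} (h : c.testBit j → p i) :
    Within p (bitMask c j i) := by
  unfold bitMask
  cases hc : c.testBit j
  · intro i hi
    simp at hi
  · exact within_two_pow (h hc)

theorem land_eq_zero_of_within {p : ℕ → Prop} {a b : ℕ} (ha : Within (¬p ·) a) (hb : Within p b) :
    a &&& b = 0 := by
  refine Nat.eq_of_testBit_eq fun i => ?_
  rw [Nat.testBit_and, Nat.zero_testBit, Bool.and_eq_false_iff]
  by_contra! h
  simp only [ne_eq, Bool.not_eq_false] at h
  exact ha i h.1 (hb i h.2)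

theorem testBit_of_land_two_pow {m s : ℕ} (h : 2 ^ s &&& m = 2 ^ s) : m.testBit s := by
  have := congrArg (Nat.testBit · s) h
  simpa [Nat.testBit_and] using this

theorem mem_disjoints {m T : ℕ} {l : List ℕ} (hT : T ∈ l) (h : T &&& m = 0) :
    T ∈ disjoints m l := by
  induction l with
  | nil => cases hT
  | cons a l ih =>
    change T ∈ sel (Nat.beq (a &&& m) 0) (a :: disjoints m l) (disjoints m l)
    rcases List.mem_cons.1 hT with rfl | hT
    · simp [h]
    · cases Nat.beq (a &&& m) 0
      · exact ih hT
      · exact List.mem_cons_of_mem _ (ih hT)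

theorem sound_of_mem_prune {p : ℕ → Prop} {inn out : ℕ} (hin : Within p inn)
    {l : List (ℕ × List ℕ)} (hl : ∀ e ∈ l, Sound p e) : ∀ e ∈ prune inn out l, Sound p e := by
  induction l with
  | nil => exact hl
  | cons a l ih =>
    have ih := ih fun e he => hl e (List.mem_cons_of_mem _ he)
    change ∀ e ∈ sel (Nat.beq (a.1 &&& out) a.1) (prune inn out l)
      (sel (anySubset out a.2) (prune inn out l) ((a.1, disjoints inn a.2) :: prune inn out l)),
      Sound p e
    cases Nat.beq (a.1 &&& out) a.1
    · cases anySubset out a.2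
      · refine List.forall_mem_cons.2 ⟨?_, ih⟩
        obtain ⟨s, hs, h⟩ := hl a List.mem_cons_self
        refine ⟨s, hs, fun hp => ?_⟩
        obtain ⟨T, hT, hpT⟩ := h hp
        exact ⟨T, mem_disjoints hT (land_eq_zero_of_within hpT hin), hpT⟩
      · exact ih
    · exact ih

theorem pick_mem (l : List (ℕ × List ℕ)) (n : ℕ) (e : ℕ × List ℕ) : pick l n e ∈ e :: l := by
  induction l generalizing n e with
  | nil => exact List.mem_cons_self
  | cons a l ih =>
    change sel (Nat.ble n (length a.2)) (pick l n e) (pick l (length a.2) a) ∈ _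
    cases Nat.ble n (length a.2)
    · exact List.mem_cons_of_mem _ (ih _ _)
    · rcases List.mem_cons.1 (ih n e) with h | h
      · exact List.mem_cons.2 (.inl h)
      · exact List.mem_cons_of_mem _ (List.mem_cons_of_mem _ h)

theorem of_fold_sel_eq_true {f : ℕ → Bool} {l : List ℕ}
    (h : fold (fun T b => sel (f T) b false) true l = true) : ∀ T ∈ l, f T = true := by
  induction l with
  | nil => simp
  | cons a l ih =>
    change sel (f a) (fold (fun T b => sel (f T) b false) true l) false = true at h
    cases hf : f a
    · rw [hf] at h
      cases h
    · rw [hf] at h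
      exact List.forall_mem_cons.2 ⟨hf, ih h⟩

theorem count7_eq (x : ℕ) : count7 x = ∑ i ∈ Finset.range 7, (x.testBit i).toNat := by
  have small : ∀ y < 128, count7 y = ∑ i ∈ Finset.range 7, (y.testBit i).toNat := by decide +kernel
  have hmod : count7 x = count7 (x % 128) := by
    change Nat.mod (Nat.shiftRight bitCounts (Nat.mul 3 (x % 128))) 8 =
      Nat.mod (Nat.shiftRight bitCounts (Nat.mul 3 (x % 128 % 128))) 8
    rw [Nat.mod_mod]
  rw [hmod, small _ (Nat.mod_lt _ (by norm_num))]
  refine Finset.sum_congr rfl fun i hi => ?_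
  rw [show 128 = 2 ^ 7 from rfl, Nat.testBit_mod_two_pow]
  simp [Finset.mem_range.1 hi]

theorem count35_eq (x : ℕ) :
    count35 x = ((Finset.range 35).filter fun i => x.testBit i).card := by
  have h : count35 x = count7 x + (count7 (x >>> 7) + (count7 (x >>> 14) +
    (count7 (x >>> 21) + count7 (x >>> 28)))) := rfl
  have hcard : ((Finset.range 35).filter fun i => x.testBit i).card =
      ∑ i ∈ Finset.range 35, (x.testBit i).toNat := by
    rw [Finset.card_filter]
    refine Finset.sum_congr rfl fun i _ => ?_
    cases x.testBit i <;> rfl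
  rw [h, hcard]
  simp only [count7_eq, Nat.testBit_shiftRight, Finset.sum_range_succ, Finset.sum_range_zero]
  norm_num
  ring

theorem count35_le {p : ℕ → Prop} [DecidablePred p] {out : ℕ} (hout : Within (¬p ·) out)
    (hp : 17 ≤ ((Finset.range 35).filter p).card) : count35 out ≤ 18 := by
  have hle : ((Finset.range 35).filter fun i => out.testBit i).card ≤
      ((Finset.range 35).filter (¬p ·)).card :=
    Finset.card_le_card (Finset.monotone_filter_right _ fun i _ => hout i)
  have := Finset.card_filter_add_card_filter_not (s := Finset.range 35) p
  rw [count35_eq]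
  simp only [Finset.card_range] at this
  omega

/-- The search never succeeds on the data of an actual family. -/
theorem refutes_eq_false {p : ℕ → Prop} [DecidablePred p]
    (hp : 17 ≤ ((Finset.range 35).filter p).card) (k : ℕ) {l : List (ℕ × List ℕ)} {inn out : ℕ}
    (hl : ∀ e ∈ l, Sound p e) (hin : Within p inn) (hout : Within (¬p ·) out) :
    refutes k l inn out = false := by
  induction k generalizing l inn out with
  | zero => rfl
  | succ k ih =>
    have hprune := sound_of_mem_prune (out := out) hin hl
    have hcount : Nat.ble 19 (count35 out) = false := by
      have := count35_le hout hp
      rw [Bool.eq_false_iff, ne_eq, Nat.ble_eq]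
      omega
    change sel (Nat.ble 19 (count35 out)) true (List.rec (motive := fun _ => Bool) false
      (fun e l _ => sel (sel (Nat.beq ((pick l (length e.2) e).1 &&& inn) (pick l (length e.2) e).1)
        true (refutes k (e :: l) inn (out ||| (pick l (length e.2) e).1)))
          (fold (fun T b => sel (refutes k (e :: l) (inn ||| (pick l (length e.2) e).1) (out ||| T))
            b false) true (pick l (length e.2) e).2) false) (prune inn out l)) = false
    rw [hcount]
    generalize prune inn out l = l' at hprune
    cases l' with
    | nil => rfl
    | cons e l =>
      change sel (sel (Nat.beq ((pick l (length e.2) e).1 &&& inn) (pick l (length e.2) e).1)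
        true (refutes k (e :: l) inn (out ||| (pick l (length e.2) e).1)))
          (fold (fun T b => sel (refutes k (e :: l) (inn ||| (pick l (length e.2) e).1) (out ||| T))
            b false) true (pick l (length e.2) e).2) false = false
      obtain ⟨s, hs, hopt⟩ := hprune _ (pick_mem l (length e.2) e)
      rw [hs]
      by_cases hps : p s
      · obtain ⟨T, hT, hpT⟩ := hopt hps
        have hfold : fold (fun T b => sel (refutes k (e :: l) (inn ||| 2 ^ s) (out ||| T)) b false)
            true (pick l (length e.2) e).2 = false := by
          by_contra h
          have := of_fold_sel_eq_true (Bool.not_eq_false _ ▸ h) T hT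
          rw [ih hprune (hin.lor (within_two_pow hps)) (hout.lor hpT)] at this
          cases this
        rw [hfold]
        generalize sel (Nat.beq _ _) _ _ = b
        cases b <;> rfl
      · have hbeq : Nat.beq (2 ^ s &&& inn) (2 ^ s) = false := by
          rw [Bool.eq_false_iff, ne_eq, Nat.beq_eq]
          exact fun h => hps (hin s (testBit_of_land_two_pow h))
        rw [hbeq, ih hprune hin (hout.lor (within_two_pow (p := (¬p ·)) hps))]

/-! ### Decoding -/

/-- The subset of `Fin 7` with binary indicator `m`. -/
def decode (m : ℕ) : Finset (Fin 7) := Finset.univ.filter fun i => m.testBit i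

theorem decode_land (a b : ℕ) : decode (a &&& b) = decode a ∩ decode b := by
  ext i
  simp [decode, Nat.testBit_and]

theorem card_decode (m : ℕ) : (decode m).card = count7 m := by
  rw [count7_eq, decode, Finset.card_filter, Finset.sum_range]
  refine Finset.sum_congr rfl fun i _ => ?_
  cases m.testBit i <;> rfl

theorem exists_decode (A : Finset (Fin 7)) : ∃ m < 128, decode m = A := by
  refine ⟨∑ i ∈ A.map Fin.valEmbedding, 2 ^ i, ?_, ?_⟩
  · revert A
    decide +kernel
  · revert A
    decide +kernel

theorem exists_triple (m : ℕ) (hm : m < 128) (h : count7 m = 3) : ∃ i < 35, triple i = m := by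
  revert m
  decide +kernel

theorem decode_injective {a b : ℕ} (ha : a < 128) (hb : b < 128) (h : decode a = decode b) :
    a = b := by
  refine Nat.eq_of_testBit_eq fun i => ?_
  by_cases hi : i < 7
  · have := Finset.ext_iff.1 h ⟨i, hi⟩
    simpa [decode] using this
  · have h128 : 128 ≤ 2 ^ i := by
      calc 128 = 2 ^ 7 := rfl
        _ ≤ 2 ^ i := Nat.pow_le_pow_right (by norm_num) (by omega)
    rw [Nat.testBit_lt_two_pow (ha.trans_le h128), Nat.testBit_lt_two_pow (hb.trans_le h128)]

theorem testBit_traceMask {S T j : ℕ} (h : (traceMask S T).testBit j) : triple j &&& S = T := by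
  have aux : ∀ l : List ℕ, Within (fun j => triple j &&& S = T)
      (fold (fun i m => bif triple i &&& S == T then 2 ^ i ||| m else m) 0 l) := by
    intro l
    induction l with
    | nil =>
      intro i hi
      change (0 : ℕ).testBit i = true at hi
      simp at hi
    | cons a l ih =>
      change Within _ (bif triple a &&& S == T then 2 ^ a ||| _ else _)
      cases ha : triple a &&& S == T
      · exact ih
      · exact (within_two_pow (p := fun j => triple j &&& S = T) (beq_iff_eq.1 ha)).lor ih
  exact aux _ j h

/-- Three distinct points can be moved to the front while the others are sorted by `g`. -/
theorem exists_perm_sorted {a b c : Fin 7} (hab : a ≠ b) (hac : a ≠ c) (hbc : b ≠ c)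
    (g : Fin 7 → ℕ) : ∃ e : Equiv.Perm (Fin 7), e 0 = a ∧ e 1 = b ∧ e 2 = c ∧
      g (e 3) ≤ g (e 4) ∧ g (e 4) ≤ g (e 5) ∧ g (e 5) ≤ g (e 6) := by
  let key : Fin 7 → ℕ := fun x => if x = a then 0 else if x = b then 1 else if x = c then 2
    else 3 + g x
  have key_a : key a = 0 := by simp [key]
  have key_b : key b = 1 := by simp [key, hab.symm]
  have key_c : key c = 2 := by simp [key, hac.symm, hbc.symm]
  have key_other : ∀ x, x ≠ a → x ≠ b → x ≠ c → key x = 3 + g x := by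
    intro x h1 h2 h3
    simp [key, h1, h2, h3]
  have hmono : Monotone (key ∘ Tuple.sort key) := Tuple.monotone_sort key
  generalize Tuple.sort key = e at hmono
  have h0 : e 0 = a := by
    have := hmono (Fin.zero_le (e.symm a))
    simp only [Function.comp_apply, Equiv.apply_symm_apply, key_a] at this
    by_contra h
    by_cases h1 : e 0 = b
    · rw [h1, key_b] at this
      omega
    by_cases h2 : e 0 = c
    · rw [h2, key_c] at this
      omega
    rw [key_other _ h h1 h2] at this
    omega
  have h1 : e 1 = b := by
    have hne : e.symm b ≠ 0 := by
      rw [ne_eq, Equiv.symm_apply_eq, h0]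
      exact hab.symm
    have hna : e 1 ≠ a := by
      rw [← h0]
      exact e.injective.ne (by decide)
    have := hmono (show 1 ≤ e.symm b by omega)
    simp only [Function.comp_apply, Equiv.apply_symm_apply, key_b] at this
    by_contra h
    by_cases h2 : e 1 = c
    · rw [h2, key_c] at this
      omega
    rw [key_other _ hna h h2] at this
    omega
  have h2 : e 2 = c := by
    have hne0 : e.symm c ≠ 0 := by
      rw [ne_eq, Equiv.symm_apply_eq, h0]
      exact hac.symm
    have hne1 : e.symm c ≠ 1 := by
      rw [ne_eq, Equiv.symm_apply_eq, h1]
      exact hbc.symm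
    have hna : e 2 ≠ a := by
      rw [← h0]
      exact e.injective.ne (by decide)
    have hnb : e 2 ≠ b := by
      rw [← h1]
      exact e.injective.ne (by decide)
    have := hmono (show 2 ≤ e.symm c by omega)
    simp only [Function.comp_apply, Equiv.apply_symm_apply, key_c] at this
    by_contra h
    rw [key_other _ hna hnb h] at this
    omega
  have key_late : ∀ i : Fin 7, 3 ≤ i → key (e i) = 3 + g (e i) := by
    intro i hi
    refine key_other _ ?_ ?_ ?_
    · rw [← h0]
      exact e.injective.ne (by omega)
    · rw [← h1]
      exact e.injective.ne (by omega)
    · rw [← h2]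
      exact e.injective.ne (by omega)
  have step : ∀ i j : Fin 7, 3 ≤ i → i ≤ j → g (e i) ≤ g (e j) := by
    intro i j hi hij
    have := hmono hij
    simp only [Function.comp_apply, key_late i hi, key_late j (hi.trans hij)] at this
    omega
  exact ⟨e, h0, h1, h2, step 3 4 (by decide) (by decide), step 4 5 (by decide) (by decide),
    step 5 6 (by decide) (by decide)⟩

/-! ### Families of triples -/

/-- `T` is a subset of the member `S` of `𝒢` that is not the trace on `S` of a member of `𝒢`. -/
def Missing (𝒢 : Finset (Finset (Fin 7))) (S T : Finset (Fin 7)) : Prop :=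
  S ∈ 𝒢 ∧ T ⊆ S ∧ ∀ F ∈ 𝒢, F ∩ S ≠ T

theorem Missing.card_le_two {𝒢 : Finset (Finset (Fin 7))} {S T : Finset (Fin 7)}
    (h : Missing 𝒢 S T) (h3 : ∀ A ∈ 𝒢, A.card = 3) : T.card ≤ 2 := by
  have hne : T ≠ S := fun hTS => h.2.2 S h.1 (by rw [Finset.inter_self, hTS])
  have := Finset.card_lt_card (h.2.1.ssubset_of_ne hne)
  have := h3 S h.1
  omega

theorem card_lt_of_refutesAll {𝒢 : Finset (Finset (Fin 7))} (h3 : ∀ A ∈ 𝒢, A.card = 3)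
    {ks : List ℕ} (hks : ∀ S ∈ 𝒢, ∃ T, Missing 𝒢 S T ∧ T.card ∈ ks) {t : ℕ}
    (href : RefutesAll ks t) {a b c : Fin 7} (hab : a ≠ b) (hac : a ≠ c) (hbc : b ≠ c)
    (hmiss : ∀ e : Equiv.Perm (Fin 7), e 0 = a → e 1 = b → e 2 = c →
      Missing 𝒢 ((decode 7).map e.toEmbedding) ((decode t).map e.toEmbedding)) :
    𝒢.card < 17 := by
  classical
  by_contra! hcard
  let code : Fin 7 → ℕ := fun x =>
    (if {a, b, x} ∈ 𝒢 then 1 else 0) + (if {a, c, x} ∈ 𝒢 then 2 else 0)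
  obtain ⟨e, rfl, rfl, rfl, h34, h45, h56⟩ := exists_perm_sorted hab hac hbc code
  obtain ⟨hS, -, hT⟩ := hmiss e rfl rfl rfl
  let p : ℕ → Prop := fun i => (decode (triple i)).map e.toEmbedding ∈ 𝒢
  have hp : 17 ≤ ((Finset.range 35).filter p).card := by
    refine hcard.trans ((Finset.card_le_card ?_).trans (Finset.card_image_le
      (f := fun i => (decode (triple i)).map e.toEmbedding)))
    intro A hA
    obtain ⟨m, hm, hmA⟩ := exists_decode (A.map e.symm.toEmbedding)
    have hm3 : count7 m = 3 := by rw [← card_decode, hmA, Finset.card_map, h3 A hA]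
    obtain ⟨i, hi, rfl⟩ := exists_triple m hm hm3
    have hAi : (decode (triple i)).map e.toEmbedding = A := by
      rw [hmA, Finset.map_map]
      ext x
      simp
    refine Finset.mem_image.2 ⟨i, Finset.mem_filter.2 ⟨Finset.mem_range.2 hi, ?_⟩, hAi⟩
    change (decode (triple i)).map e.toEmbedding ∈ 𝒢
    rwa [hAi]
  have within_traceMask : ∀ S t', (∀ F ∈ 𝒢, F ∩ (decode S).map e.toEmbedding ≠
      (decode t').map e.toEmbedding) → Within (¬p ·) (traceMask S t') := by
    intro S t' h j hj hpj
    refine h _ hpj ?_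
    rw [← Finset.map_inter, ← decode_land, testBit_traceMask hj]
  have hsound : ∀ d ∈ table ks, Sound p d := by
    intro d hd
    obtain ⟨i, -, rfl⟩ := List.mem_map.1 hd
    refine ⟨i, rfl, fun hpi => ?_⟩
    obtain ⟨T, ⟨-, hTS, hTF⟩, hTk⟩ := hks _ hpi
    obtain ⟨m, hm, hmT⟩ := exists_decode (T.map e.symm.toEmbedding)
    have hmT' : (decode m).map e.toEmbedding = T := by
      rw [hmT, Finset.map_map]
      ext x
      simp
    refine ⟨traceMask (triple i) m, List.mem_map.2 ⟨m, ?_, rfl⟩,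
      within_traceMask _ _ (by rwa [hmT'])⟩
    have hsub : m &&& triple i = m := by
      refine decode_injective (Nat.and_le_left.trans_lt hm) hm ?_
      rw [decode_land, Finset.inter_eq_left]
      rwa [← hmT', Finset.map_subset_map] at hTS
    have hcount : count7 m ∈ ks := by
      rwa [← card_decode, ← Finset.card_map e.toEmbedding, hmT']
    simp [List.mem_filter, hm, hsub, hcount]
  have code_lt : ∀ x, code x < 4 := by
    intro x
    simp only [code]
    split_ifs <;> norm_num
  have code_spec : ∀ x, ((code x).testBit 0 → {e 0, e 1, x} ∈ 𝒢) ∧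
      ((code x).testBit 1 → {e 0, e 2, x} ∈ 𝒢) ∧
      ((3 - code x).testBit 0 → {e 0, e 1, x} ∉ 𝒢) ∧
      ((3 - code x).testBit 1 → {e 0, e 2, x} ∉ 𝒢) := by
    intro x
    by_cases h1 : {e 0, e 1, x} ∈ 𝒢 <;> by_cases h2 : {e 0, e 2, x} ∈ 𝒢 <;>
      simp [code, h1, h2] <;> decide
  have hp_iff : ∀ i x y z, decode (triple i) = {x, y, z} → (p i ↔ {e x, e y, e z} ∈ 𝒢) := by
    intro i x y z h
    simp [p, h, Finset.map_insert]
  have p1 := hp_iff 1 0 1 3 (by decide)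
  have p2 := hp_iff 2 0 2 3 (by decide)
  have p4 := hp_iff 4 0 1 4 (by decide)
  have p5 := hp_iff 5 0 2 4 (by decide)
  have p10 := hp_iff 10 0 1 5 (by decide)
  have p11 := hp_iff 11 0 2 5 (by decide)
  have p20 := hp_iff 20 0 1 6 (by decide)
  have p21 := hp_iff 21 0 2 6 (by decide)
  obtain ⟨i3, i3', o3, o3'⟩ := code_spec (e 3)
  obtain ⟨i4, i4', o4, o4'⟩ := code_spec (e 4)
  obtain ⟨i5, i5', o5, o5'⟩ := code_spec (e 5)
  obtain ⟨i6, i6', o6, o6'⟩ := code_spec (e 6)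
  rw [← p1] at i3 o3
  rw [← p2] at i3' o3'
  rw [← p4] at i4 o4
  rw [← p5] at i4' o4'
  rw [← p10] at i5 o5
  rw [← p11] at i5' o5'
  rw [← p20] at i6 o6
  rw [← p21] at i6' o6'
  have within_codeMask : ∀ {q : ℕ → Prop} {c₃ c₄ c₅ c₆ : ℕ},
      (c₃.testBit 0 → q 1) → (c₃.testBit 1 → q 2) → (c₄.testBit 0 → q 4) → (c₄.testBit 1 → q 5) →
      (c₅.testBit 0 → q 10) → (c₅.testBit 1 → q 11) → (c₆.testBit 0 → q 20) →
      (c₆.testBit 1 → q 21) → Within q (codeMask c₃ c₄ c₅ c₆) := by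
    intro q c₃ c₄ c₅ c₆ h1 h2 h4 h5 h10 h11 h20 h21
    exact ((((((((within_bitMask h1).lor (within_bitMask h2)).lor (within_bitMask h4)).lor
      (within_bitMask h5)).lor (within_bitMask h10)).lor (within_bitMask h11)).lor
      (within_bitMask h20)).lor (within_bitMask h21))
  have htrue := href _ (code_lt (e 6)) _ (Nat.lt_succ_of_le h56) _ (Nat.lt_succ_of_le h45) _
    (Nat.lt_succ_of_le h34)
  have hfalse := refutes_eq_false hp 36 hsound
    ((within_two_pow (p := p) (i := 0) hS).lor (within_codeMask i3 i3' i4 i4' i5 i5' i6 i6'))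
    ((within_traceMask 7 t hT).lor
      (within_codeMask (q := (¬p ·)) o3 o3' o4 o4' o5 o5' o6 o6'))
  rw [pow_zero, htrue] at hfalse
  cases hfalse

/-- A family of 3-element subsets of `Fin 7` each of which has a missing trace has at most 16
members. -/
theorem card_lt_of_missing {𝒢 : Finset (Finset (Fin 7))} (h3 : ∀ A ∈ 𝒢, A.card = 3)
    (h : ∀ S ∈ 𝒢, ∃ T, Missing 𝒢 S T) : 𝒢.card < 17 := by
  have map7 : ∀ e : Equiv.Perm (Fin 7), (decode 7).map e.toEmbedding = {e 0, e 1, e 2} := by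
    intro e
    rw [show decode 7 = {0, 1, 2} by decide]
    simp [Finset.map_insert]
  by_cases h1 : ∃ S T, Missing 𝒢 S T ∧ T.card = 1
  · obtain ⟨S, T, hST, hT⟩ := h1
    obtain ⟨a, rfl⟩ := Finset.card_eq_one.1 hT
    have ha : a ∈ S := hST.2.1 (Finset.mem_singleton_self a)
    obtain ⟨b, c, hbc, hS⟩ := Finset.card_eq_two.1
      (show (S.erase a).card = 2 by rw [Finset.card_erase_of_mem ha, h3 S hST.1])
    have hb : b ∈ S.erase a := by simp [hS]
    have hc : c ∈ S.erase a := by simp [hS]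
    refine card_lt_of_refutesAll h3 (fun S hS => ?_) refutesAll_singleton
      (Finset.ne_of_mem_erase hb).symm (Finset.ne_of_mem_erase hc).symm hbc ?_
    · obtain ⟨T, hT⟩ := h S hS
      have := hT.card_le_two h3
      refine ⟨T, hT, ?_⟩
      interval_cases T.card <;> simp
    · rintro e rfl rfl rfl
      rw [map7, ← hS, Finset.insert_erase ha, show decode 1 = {0} by decide]
      simpa using hST
  by_cases h2 : ∃ S T, Missing 𝒢 S T ∧ T.card = 2
  · obtain ⟨S, T, hST, hT⟩ := h2
    obtain ⟨b, c, hbc, rfl⟩ := Finset.card_eq_two.1 hT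
    obtain ⟨a, ha⟩ := Finset.card_eq_one.1
      (show (S \ {b, c}).card = 1 by rw [Finset.card_sdiff_of_subset hST.2.1, h3 S hST.1, hT])
    have haS : a ∈ S \ {b, c} := by simp [ha]
    have hne : a ≠ b ∧ a ≠ c := by simpa using (Finset.mem_sdiff.1 haS).2
    have hS : {a, b, c} = S := by
      rw [← Finset.sdiff_union_of_subset hST.2.1, ha]
      rfl
    refine card_lt_of_refutesAll h3 (fun S hS => ?_) refutesAll_pair hne.1 hne.2 hbc ?_
    · obtain ⟨T, hT⟩ := h S hS
      have := hT.card_le_two h3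
      have hT1 : T.card ≠ 1 := fun h' => h1 ⟨S, T, hT, h'⟩
      refine ⟨T, hT, ?_⟩
      interval_cases T.card <;> simp_all
    · rintro e rfl rfl rfl
      rw [map7, hS, show decode 6 = {1, 2} by decide]
      simpa [Finset.map_insert] using hST
  have hempty : ∀ S ∈ 𝒢, Missing 𝒢 S ∅ := by
    intro S hS
    obtain ⟨T, hT⟩ := h S hS
    have := hT.card_le_two h3
    have hT1 : T.card ≠ 1 := fun h' => h1 ⟨S, T, hT, h'⟩
    have hT2 : T.card ≠ 2 := fun h' => h2 ⟨S, T, hT, h'⟩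
    rwa [Finset.card_eq_zero.1 (by omega : T.card = 0)] at hT
  obtain rfl | ⟨S, hS⟩ := 𝒢.eq_empty_or_nonempty
  · simp
  obtain ⟨a, b, c, hab, hac, hbc, rfl⟩ := Finset.card_eq_three.1 (h3 S hS)
  refine card_lt_of_refutesAll h3 (fun S hS => ⟨∅, hempty S hS, by simp⟩) refutesAll_empty
    hab hac hbc ?_
  rintro e rfl rfl rfl
  rw [map7, show decode 0 = ∅ by decide]
  exact hempty _ hS

end TripleSearch

/-- Every family of 3-element subsets of `[7]` that shatters no 3-element subset of `[7]`
has at most `C(6,2) + 1 = 16` members. -/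
theorem stmt_3 (𝒻 : Finset (Finset ℕ))
    (hsub : ∀ F ∈ 𝒻, F ⊆ Finset.Icc 1 7) (hcard : ∀ F ∈ 𝒻, F.card = 3)
    (hVC : ∀ S ⊆ Finset.Icc 1 7, S.card = 3 → ¬ Shatters 𝒻 S) :
    𝒻.card ≤ Nat.choose 6 2 + 1 ∧ Nat.choose 6 2 + 1 = 16 := by
  refine ⟨?_, by decide⟩
  let ι : Fin 7 ↪ ℕ := ⟨fun i => i + 1, fun i j h => Fin.ext (by simpa using h)⟩
  have hι : Finset.univ.map ι = Finset.Icc 1 7 := by decide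
  have lift : ∀ A ⊆ Finset.Icc 1 7, ∃ B : Finset (Fin 7), B.map ι = A := by
    intro A hA
    rw [← hι, Finset.subset_map_iff] at hA
    obtain ⟨B, -, rfl⟩ := hA
    exact ⟨B, rfl⟩
  let 𝒢 : Finset (Finset (Fin 7)) := Finset.univ.filter fun B => B.map ι ∈ 𝒻
  have mem𝒢 : ∀ B, B ∈ 𝒢 ↔ B.map ι ∈ 𝒻 := fun B => by simp [𝒢]
  have himage : 𝒻 ⊆ 𝒢.image (Finset.map ι) := by
    intro A hA
    obtain ⟨B, rfl⟩ := lift A (hsub A hA)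
    exact Finset.mem_image_of_mem _ ((mem𝒢 B).2 hA)
  have h3 : ∀ B ∈ 𝒢, B.card = 3 := fun B hB => by
    rw [← Finset.card_map ι, hcard _ ((mem𝒢 B).1 hB)]
  have hmissing : ∀ S ∈ 𝒢, ∃ T, TripleSearch.Missing 𝒢 S T := by
    intro S hS
    have hS' := (mem𝒢 S).1 hS
    have := hVC _ (hsub _ hS') (hcard _ hS')
    simp only [Shatters, not_forall, not_exists, not_and] at this
    obtain ⟨T, hTS, hT⟩ := this
    obtain ⟨U, rfl⟩ := lift T (hTS.trans (hsub _ hS'))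
    refine ⟨U, hS, Finset.map_subset_map.1 hTS, fun F hF hFS => hT _ ((mem𝒢 F).1 hF) ?_⟩
    rw [← Finset.map_inter, hFS]
  have hlt := TripleSearch.card_lt_of_missing h3 hmissing
  have hle := (Finset.card_le_card himage).trans Finset.card_image_le
  have : Nat.choose 6 2 = 15 := by decide
  omega
end
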